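/- arXiv:math/0502170 — 15 statements merged into one kernel-verified Lean document; each statement's English description precedes it below -/
import Mathlib

section
/- Let k > -1/2 be a real number, let a1, a2, a3 be real numbers, and let λ1, λ2, λ3, λ4 > 0. Define α = (1-k)a1, β = (1+2k)a3, and γ = (k+2)a2 - (1+2k)a1a3. Then the three quantities βγλ2 + (k-1)αλ3, (2+k)γ, and αγλ1 + (1+2k)βλ2 all vanish if and only if a2 = 0, a3 = 0, and (k = 1 or a1 = 0). (This is the algebraic content of Proposition 1: for the class U1[1,1,1], a diagonal initial metric remains diagonal under Ricci flow if and only if a1 = a2 = a3 = 0 when k ≠ 1, and if and only if a2 = a3 = 0 when k = 1.) -/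
/-- Proposition 1 (class U1[1,1,1]): the off-diagonal Ricci components of a
diagonal metric vanish iff `a2 = 0`, `a3 = 0` and (`k = 1` or `a1 = 0`). -/
theorem stmt0 (k a1 a2 a3 l1 l2 l3 l4 α β γ : ℝ)
    (hk : -(1 / 2) < k)
    (hl1 : 0 < l1) (hl2 : 0 < l2) (hl3 : 0 < l3) (hl4 : 0 < l4)
    (hα : α = (1 - k) * a1)
    (hβ : β = (1 + 2 * k) * a3)
    (hγ : γ = (k + 2) * a2 - (1 + 2 * k) * a1 * a3) :
    (β * γ * l2 + (k - 1) * α * l3 = 0 ∧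
      (2 + k) * γ = 0 ∧
      α * γ * l1 + (1 + 2 * k) * β * l2 = 0) ↔
    (a2 = 0 ∧ a3 = 0 ∧ (k = 1 ∨ a1 = 0)) := by
  have h1 : (1 + 2 * k) ≠ 0 := ne_of_gt (by linarith)
  have h2 : (2 + k) ≠ 0 := ne_of_gt (by linarith)
  constructor
  · rintro ⟨e1, e2, e3⟩
    have g0 : γ = 0 := (mul_eq_zero.mp e2).resolve_left h2
    rw [g0] at e1 e3
    have b0 : a3 = 0 := by
      have : ((1 + 2 * k) * (1 + 2 * k) * l2) * a3 = 0 := by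
        rw [hβ] at e3
        linarith
      exact (mul_eq_zero.mp this).resolve_left (mul_ne_zero (mul_ne_zero h1 h1) hl2.ne')
    have c0 : a2 = 0 := by
      have : (2 + k) * a2 = 0 := by
        rw [g0, b0] at hγ
        linarith
      exact (mul_eq_zero.mp this).resolve_left h2
    refine ⟨c0, b0, ?_⟩
    by_cases hk1 : k = 1
    · exact Or.inl hk1
    · right
      have hne : k - 1 ≠ 0 := sub_ne_zero.mpr hk1
      have : ((k - 1) * (k - 1) * l3) * a1 = 0 := by
        rw [hα] at e1
        linarith
      exact (mul_eq_zero.mp this).resolve_left (mul_ne_zero (mul_ne_zero hne hne) hl3.ne')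
  · rintro ⟨rfl, rfl, rfl | rfl⟩ <;> subst hα hβ hγ <;> simp
end

section
/- Let k be a real number, let a1, a2, a3 be real numbers, and let λ1, λ2, λ3, λ4 > 0. Define α = a2, β = a2a3 - a1a2² - a1 - 3ka3, and γ = a3 - 3ka1 - a1a2. Then the three quantities 2αλ1 + 2α(1+α²)λ2 + βγλ3, γλ1 + (α-3k)βλ2, and (α+3k)γλ1 + (1+α²)βλ2 all vanish if and only if a1 = a2 = a3 = 0. (This is the algebraic content of Proposition 2 for the class U1[Z,Z̄,1]: a diagonal initial metric remains diagonal under Ricci flow if and only if a1 = a2 = a3 = 0.) -/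
/-- Proposition 2 (class U1[Z,Z̄,1]): the off-diagonal Ricci components of a
diagonal metric vanish iff `a1 = a2 = a3 = 0`. -/
theorem stmt1 (k a1 a2 a3 l1 l2 l3 l4 α β γ : ℝ)
    (hl1 : 0 < l1) (hl2 : 0 < l2) (hl3 : 0 < l3) (hl4 : 0 < l4)
    (hα : α = a2)
    (hβ : β = a2 * a3 - a1 * a2 ^ 2 - a1 - 3 * k * a3)
    (hγ : γ = a3 - 3 * k * a1 - a1 * a2) :
    (2 * α * l1 + 2 * α * (1 + α ^ 2) * l2 + β * γ * l3 = 0 ∧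
      γ * l1 + (α - 3 * k) * β * l2 = 0 ∧
      (α + 3 * k) * γ * l1 + (1 + α ^ 2) * β * l2 = 0) ↔
    (a1 = 0 ∧ a2 = 0 ∧ a3 = 0) := by
  have hk : (0 : ℝ) < 1 + 9 * k ^ 2 := by positivity
  constructor
  · rintro ⟨h1, h2, h3⟩
    have hb : β = 0 := by
      have h : β * (l2 * (1 + 9 * k ^ 2)) = 0 := by
        linear_combination h3 - (α + 3 * k) * h2
      exact (mul_eq_zero.mp h).resolve_right (by positivity)
    have hg : γ = 0 := by
      have h : γ * l1 = 0 := by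
        rw [hb] at h2
        linear_combination h2
      exact (mul_eq_zero.mp h).resolve_right hl1.ne'
    have ha : α = 0 := by
      have h : α * (2 * l1 + 2 * (1 + α ^ 2) * l2) = 0 := by
        rw [hb] at h1
        linear_combination h1
      exact (mul_eq_zero.mp h).resolve_right (by positivity)
    have ha2 : a2 = 0 := hα ▸ ha
    rw [hb, ha2] at hβ
    rw [hg, ha2] at hγ
    have ha1 : a1 = 0 := by
      have h : a1 * (1 + 9 * k ^ 2) = 0 := by
        linear_combination hβ + 3 * k * hγ
      exact (mul_eq_zero.mp h).resolve_right hk.ne'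
    refine ⟨ha1, ha2, ?_⟩
    rw [ha1] at hγ
    linear_combination -hγ
  · rintro ⟨rfl, rfl, rfl⟩
    simp [hα, hβ, hγ]
end

section
/- Let k ∈ ℝ and λ1, λ2, λ4 > 0. Suppose A, B, D : [0,∞) → ℝ are differentiable, strictly positive, and satisfy A' = -(A² - B²)/(BD), B' = -(B² - A²)/(AD), D' = ((A - B)² + 12k²AB)/(AB), with A(0) = λ1, B(0) = λ2, D(0) = λ4. Then A(t)B(t) = λ1λ2 for all t ≥ 0, and (A - B)'(t) = -((A(t)+B(t))²/(A(t)B(t)D(t)))·(A(t) - B(t)); in particular |A(t) - B(t)| is nonincreasing in t, and if λ1 = λ2 then A(t) = B(t) = λ1 for all t ≥ 0. -/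
/-- Ricci flow on the class U1[Z,Z̄,1]: the product `A·B` is conserved,
`(A - B)' = -((A+B)²/(ABD))·(A-B)`, `|A - B|` is nonincreasing, and if
`λ1 = λ2` then `A ≡ B ≡ λ1`. -/
theorem stmt6 (k l1 l2 l4 : ℝ)
    (hl1 : 0 < l1) (hl2 : 0 < l2) (hl4 : 0 < l4)
    (A B D : ℝ → ℝ)
    (hA0 : A 0 = l1) (hB0 : B 0 = l2) (hD0 : D 0 = l4)
    (hApos : ∀ t ≥ (0 : ℝ), 0 < A t)
    (hBpos : ∀ t ≥ (0 : ℝ), 0 < B t)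
    (hDpos : ∀ t ≥ (0 : ℝ), 0 < D t)
    (hA' : ∀ t ≥ (0 : ℝ), HasDerivAt A (-(A t ^ 2 - B t ^ 2) / (B t * D t)) t)
    (hB' : ∀ t ≥ (0 : ℝ), HasDerivAt B (-(B t ^ 2 - A t ^ 2) / (A t * D t)) t)
    (hD' : ∀ t ≥ (0 : ℝ), HasDerivAt D
      (((A t - B t) ^ 2 + 12 * k ^ 2 * A t * B t) / (A t * B t)) t) :
    (∀ t ≥ (0 : ℝ), A t * B t = l1 * l2) ∧
    (∀ t ≥ (0 : ℝ), HasDerivAt (fun s => A s - B s)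
      (-((A t + B t) ^ 2 / (A t * B t * D t)) * (A t - B t)) t) ∧
    AntitoneOn (fun t => |A t - B t|) (Set.Ici (0 : ℝ)) ∧
    (l1 = l2 → ∀ t ≥ (0 : ℝ), A t = l1 ∧ B t = l1) := by
  have hsub : ∀ t ≥ (0 : ℝ), HasDerivAt (fun s => A s - B s)
      (-((A t + B t) ^ 2 / (A t * B t * D t)) * (A t - B t)) t := by
    intro t ht
    have h1 := (hApos t ht).ne'
    have h2 := (hBpos t ht).ne'
    have h3 := (hDpos t ht).ne'
    refine ((hA' t ht).fun_sub (hB' t ht)).congr_deriv ?_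
    field_simp
    ring
  have hprod : ∀ t ≥ (0 : ℝ), HasDerivAt (fun s => A s * B s) 0 t := by
    intro t ht
    have h1 := (hApos t ht).ne'
    have h2 := (hBpos t ht).ne'
    have h3 := (hDpos t ht).ne'
    refine ((hA' t ht).fun_mul (hB' t ht)).congr_deriv ?_
    field_simp
    ring
  have hconst : ∀ t ≥ (0 : ℝ), A t * B t = l1 * l2 := by
    intro t ht
    have h := constant_of_has_deriv_right_zero (f := fun s => A s * B s) (a := 0) (b := t)
      (fun x hx => (hprod x hx.1).continuousAt.continuousWithinAt)
      (fun x hx => (hprod x hx.1).hasDerivWithinAt) t ⟨ht, le_refl t⟩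
    simpa [hA0, hB0] using h
  have hsq : ∀ t ≥ (0 : ℝ), HasDerivAt (fun s => (A s - B s) ^ 2)
      (-(2 * ((A t + B t) ^ 2 / (A t * B t * D t)) * (A t - B t) ^ 2)) t := by
    intro t ht
    refine ((hsub t ht).fun_pow 2).congr_deriv ?_
    push_cast
    ring
  have hanti : AntitoneOn (fun s => (A s - B s) ^ 2) (Set.Ici (0 : ℝ)) := by
    refine antitoneOn_of_deriv_nonpos (convex_Ici 0)
      (fun x hx => (hsq x hx).continuousAt.continuousWithinAt)
      (fun x hx => (hsq x (interior_subset hx)).differentiableAt.differentiableWithinAt) ?_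
    intro x hx
    have hx0 : x ≥ 0 := interior_subset hx
    rw [(hsq x hx0).deriv]
    have h1 := hApos x hx0
    have h2 := hBpos x hx0
    have h3 := hDpos x hx0
    have : 0 ≤ 2 * ((A x + B x) ^ 2 / (A x * B x * D x)) * (A x - B x) ^ 2 := by positivity
    linarith
  have habs : AntitoneOn (fun t => |A t - B t|) (Set.Ici (0 : ℝ)) :=
    fun x hx y hy hxy => sq_le_sq.mp (hanti hx hy hxy)
  refine ⟨hconst, hsub, habs, ?_⟩
  intro h t ht
  have h1 : |A t - B t| ≤ |A 0 - B 0| := habs (Set.self_mem_Ici) ht ht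
  rw [hA0, hB0, h, sub_self, abs_zero] at h1
  have h2 : A t = B t := sub_eq_zero.mp (abs_nonpos_iff.mp h1)
  have h3 := hconst t ht
  have h4 := hApos t ht
  rw [← h2, ← h] at h3
  have h5 : A t = l1 := by nlinarith
  exact ⟨h5, h2 ▸ h5⟩
end

section
/- Let k ∈ ℝ and λ4 > 0, λ2 ≥ λ1 > 0. Suppose A, B, D : [0,∞) → ℝ are differentiable, strictly positive, and satisfy A' = -(A² - B²)/(BD), B' = -(B² - A²)/(AD), D' = ((A - B)² + 12k²AB)/(AB), with A(0) = λ1, B(0) = λ2, D(0) = λ4. Then for all t ≥ 0: 12k² ≤ D'(t) ≤ 12k² + λ2/λ1, hence λ4 + 12k²t ≤ D(t) ≤ λ4 + (12k² + λ2/λ1)t; moreover A(t) → √(λ1λ2) and B(t) → √(λ1λ2) as t → ∞. -/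
open Filter

theorem stmt7_aux (f f' : ℝ → ℝ) (h : ∀ t ≥ (0:ℝ), HasDerivAt f (f' t) t)
    (hn : ∀ t ≥ (0:ℝ), f' t ≤ 0) : ∀ t ≥ (0:ℝ), f t ≤ f 0 := by
  have ha : AntitoneOn f (Set.Ici 0) := by
    apply antitoneOn_of_deriv_nonpos (convex_Ici 0)
    · intro t ht
      exact (h t ht).continuousAt.continuousWithinAt
    · intro t ht
      rw [interior_Ici] at ht
      exact (h t (le_of_lt ht)).differentiableAt.differentiableWithinAt
    · intro t ht
      rw [interior_Ici] at ht
      rw [(h t (le_of_lt ht)).deriv]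
      exact hn t (le_of_lt ht)
  intro t ht
  exact ha (Set.mem_Ici.2 le_rfl) ht ht

/-- Ricci flow on the class U1[Z,Z̄,1]: bounds on `D'` and `D`, and
convergence of `A` and `B` to `√(λ1 λ2)`. -/
theorem stmt7 (k l1 l2 l4 : ℝ)
    (hl1 : 0 < l1) (hl2 : 0 < l2) (hl4 : 0 < l4) (hle : l1 ≤ l2)
    (A B D : ℝ → ℝ)
    (hA0 : A 0 = l1) (hB0 : B 0 = l2) (hD0 : D 0 = l4)
    (hApos : ∀ t ≥ (0 : ℝ), 0 < A t)
    (hBpos : ∀ t ≥ (0 : ℝ), 0 < B t)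
    (hDpos : ∀ t ≥ (0 : ℝ), 0 < D t)
    (hA' : ∀ t ≥ (0 : ℝ), HasDerivAt A (-(A t ^ 2 - B t ^ 2) / (B t * D t)) t)
    (hB' : ∀ t ≥ (0 : ℝ), HasDerivAt B (-(B t ^ 2 - A t ^ 2) / (A t * D t)) t)
    (hD' : ∀ t ≥ (0 : ℝ), HasDerivAt D
      (((A t - B t) ^ 2 + 12 * k ^ 2 * A t * B t) / (A t * B t)) t) :
    (∀ t ≥ (0 : ℝ), 12 * k ^ 2 ≤ deriv D t ∧ deriv D t ≤ 12 * k ^ 2 + l2 / l1) ∧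
    (∀ t ≥ (0 : ℝ), l4 + 12 * k ^ 2 * t ≤ D t ∧ D t ≤ l4 + (12 * k ^ 2 + l2 / l1) * t) ∧
    Tendsto A atTop (nhds (Real.sqrt (l1 * l2))) ∧
    Tendsto B atTop (nhds (Real.sqrt (l1 * l2))) := by
  have hPd : ∀ t ≥ (0:ℝ), HasDerivAt (fun t => A t * B t) 0 t := by
    intro t ht
    have a := hApos t ht
    have b := hBpos t ht
    have d := hDpos t ht
    refine ((hA' t ht).mul (hB' t ht)).congr_deriv ?_
    field_simp
    ring
  have hP : ∀ t ≥ (0:ℝ), A t * B t = l1 * l2 := by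
    intro t ht
    have h1 := stmt7_aux _ (fun _ => 0) hPd (fun _ _ => le_rfl) t ht
    have h2 := stmt7_aux (fun t => -(A t * B t)) (fun _ => -0) (fun t ht => (hPd t ht).neg)
      (fun _ _ => by simp) t ht
    simp only [hA0, hB0] at h1 h2
    linarith
  have hPpos : 0 < l1 * l2 := mul_pos hl1 hl2
  have hE' : ∀ t ≥ (0:ℝ), HasDerivAt (fun t => (A t - B t) ^ 2)
      (-(2 * (A t - B t) ^ 2 * (A t + B t) ^ 2) / (A t * B t * D t)) t := by
    intro t ht
    have a := hApos t ht
    have b := hBpos t ht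
    have d := hDpos t ht
    refine (((hA' t ht).sub (hB' t ht)).pow 2).congr_deriv ?_
    simp only [Pi.sub_apply]
    field_simp
    ring
  have hE : ∀ t ≥ (0:ℝ), (A t - B t) ^ 2 ≤ (l1 - l2) ^ 2 := by
    intro t ht
    have := stmt7_aux _ _ hE' (fun t ht => by
      have a := hApos t ht
      have b := hBpos t ht
      have d := hDpos t ht
      rw [neg_div]
      have : 0 ≤ (2 * (A t - B t) ^ 2 * (A t + B t) ^ 2) / (A t * B t * D t) := by positivity
      linarith) t ht
    simpa only [hA0, hB0] using this
  have hbd : ∀ t ≥ (0:ℝ), 12 * k ^ 2 ≤ ((A t - B t) ^ 2 + 12 * k ^ 2 * A t * B t) / (A t * B t) ∧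
      ((A t - B t) ^ 2 + 12 * k ^ 2 * A t * B t) / (A t * B t) ≤ 12 * k ^ 2 + l2 / l1 := by
    intro t ht
    have h1 : 12 * k ^ 2 * A t * B t = 12 * k ^ 2 * (l1 * l2) := by rw [← hP t ht]; ring
    rw [h1, hP t ht, add_div, mul_div_cancel_right₀ _ hPpos.ne']
    have h2 : 0 ≤ (A t - B t) ^ 2 / (l1 * l2) := by positivity
    have h3 : (A t - B t) ^ 2 / (l1 * l2) ≤ l2 / l1 := by
      rw [div_le_div_iff₀ hPpos hl1]
      have := hE t ht
      have h4 : (A t - B t) ^ 2 ≤ l2 ^ 2 := by nlinarith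
      nlinarith
    constructor <;> linarith
  have hDb : ∀ t ≥ (0 : ℝ), l4 + 12 * k ^ 2 * t ≤ D t ∧
      D t ≤ l4 + (12 * k ^ 2 + l2 / l1) * t := by
    intro t ht
    have h1 := stmt7_aux (fun t => 12 * k ^ 2 * t - D t) _
      (fun t ht => ((hasDerivAt_id t).const_mul (12 * k ^ 2)).sub (hD' t ht))
      (fun t ht => by have := (hbd t ht).1; linarith) t ht
    have h2 := stmt7_aux (fun t => D t - (12 * k ^ 2 + l2 / l1) * t) _
      (fun t ht => (hD' t ht).sub ((hasDerivAt_id t).const_mul (12 * k ^ 2 + l2 / l1)))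
      (fun t ht => by have := (hbd t ht).2; linarith) t ht
    simp only [hD0] at h1 h2
    constructor <;> linarith
  refine ⟨fun t ht => by rw [(hD' t ht).deriv]; exact hbd t ht, hDb, ?_⟩
  obtain ⟨M, hM⟩ : ∃ M, M = 12 * k ^ 2 + l2 / l1 := ⟨_, rfl⟩
  rw [← hM] at hDb
  have hMpos : 0 < M := by rw [hM]; positivity
  have hL : ∀ t ≥ (0:ℝ), 0 < l4 + M * t := fun t ht => by positivity
  obtain ⟨C, hC⟩ : ∃ C, C = M / 8 - Real.log l4 := ⟨_, rfl⟩
  have hCL : ∀ t ≥ (0:ℝ), M / 8 ≤ C + Real.log (l4 + M * t) := by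
    intro t ht
    have : Real.log l4 ≤ Real.log (l4 + M * t) :=
      Real.log_le_log hl4 (by have : 0 ≤ M * t := by positivity
                              linarith)
    linarith
  have hG := stmt7_aux (fun t => (A t - B t) ^ 2 * (C + Real.log (l4 + M * t))) _
    (fun t ht => (hE' t ht).mul
      (((((hasDerivAt_id t).const_mul M).const_add l4).log (hL t ht).ne').const_add C))
    (fun t ht => by
      have a := hApos t ht
      have b := hBpos t ht
      have d := hDpos t ht
      have l := hL t ht
      have c := hCL t ht
      have hd := (hDb t ht).2
      simp only [id, mul_one]
      have e0 : 0 ≤ (A t - B t) ^ 2 := sq_nonneg _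
      have e1 : 8 * (A t - B t) ^ 2 / (l4 + M * t) ≤
          (2 * (A t - B t) ^ 2 * (A t + B t) ^ 2) / (A t * B t * D t) := by
        have : 8 * (A t - B t) ^ 2 / (l4 + M * t) ≤ 8 * (A t - B t) ^ 2 / D t := by gcongr
        refine this.trans ?_
        rw [div_le_div_iff₀ d (by positivity)]
        have h4 : 4 * (A t * B t) ≤ (A t + B t) ^ 2 := by nlinarith
        have := mul_le_mul_of_nonneg_left h4
          (show 0 ≤ 2 * (A t - B t) ^ 2 * D t by positivity)
        linarith
      have e2 : 8 * (A t - B t) ^ 2 / (l4 + M * t) * (M / 8) ≤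
          (2 * (A t - B t) ^ 2 * (A t + B t) ^ 2) / (A t * B t * D t)
            * (C + Real.log (l4 + M * t)) := by
        gcongr
      have e3 : 8 * (A t - B t) ^ 2 / (l4 + M * t) * (M / 8) =
        (A t - B t) ^ 2 * (M / (l4 + M * t)) := by ring
      rw [neg_div]
      linarith)
  have hlog : Tendsto (fun t => C + Real.log (l4 + M * t)) atTop atTop :=
    tendsto_atTop_add_const_left _ _ (Real.tendsto_log_atTop.comp
      (tendsto_atTop_add_const_left _ _ (tendsto_id.const_mul_atTop hMpos)))
  have hE0 : Tendsto (fun t => (A t - B t) ^ 2) atTop (nhds 0) := by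
    refine squeeze_zero' (Eventually.of_forall fun t => sq_nonneg _) ?_
      ((tendsto_const_nhds (x := (A 0 - B 0) ^ 2 * (C + Real.log (l4 + M * 0)))).div_atTop hlog)
    filter_upwards [eventually_ge_atTop 0] with t ht
    have := hCL t ht
    rw [le_div_iff₀ (by linarith [div_pos hMpos (show (0:ℝ) < 8 by norm_num)])]
    exact hG t ht
  have hdiff : Tendsto (fun t => A t - B t) atTop (nhds 0) := by
    have := (Real.continuous_sqrt.tendsto 0).comp hE0
    rw [Real.sqrt_zero] at this
    refine (tendsto_zero_iff_abs_tendsto_zero _).2 (this.congr fun t => ?_)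
    simp [Real.sqrt_sq_eq_abs]
  have hsum : Tendsto (fun t => A t + B t) atTop (nhds (2 * Real.sqrt (l1 * l2))) := by
    have h1 := (Real.continuous_sqrt.tendsto _).comp (hE0.add_const (4 * (l1 * l2)))
    have h2 : Real.sqrt (0 + 4 * (l1 * l2)) = 2 * Real.sqrt (l1 * l2) := by
      rw [zero_add, Real.sqrt_mul (by norm_num), show (4:ℝ) = 2 ^ 2 by norm_num,
        Real.sqrt_sq (by norm_num)]
    rw [h2] at h1
    refine h1.congr' ?_
    filter_upwards [eventually_ge_atTop 0] with t ht
    have a := hApos t ht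
    have b := hBpos t ht
    simp only [Function.comp]
    rw [← hP t ht, show (A t - B t) ^ 2 + 4 * (A t * B t) = (A t + B t) ^ 2 by ring,
      Real.sqrt_sq (by positivity)]
  constructor
  · have := (hsum.add hdiff).div_const 2
    convert this using 2 <;> ring
  · have := (hsum.sub hdiff).div_const 2
    convert this using 2 <;> ring
end

section
/- Let λ1, λ2, λ3, λ4 > 0 and define, for t ≥ 0: A(t) = (λ1³ + (3λ1²λ2/λ4)t)^{1/3}, B(t) = λ1λ2 / A(t), C(t) = λ3, D(t) = (λ4/λ1)A(t). Then A, B, C, D are strictly positive, satisfy A(0) = λ1, B(0) = λ2, C(0) = λ3, D(0) = λ4, and solve the system A' = B/D, B' = -B²/(AD), C' = 0, D' = B/A on [0,∞). Moreover A(t)B(t) = λ1λ2 and A(t)/D(t) = λ1/λ4 for all t ≥ 0, and as t → ∞, A(t) → ∞, B(t) → 0⁺, and D(t) → ∞. -/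
open Filter

/-- Explicit Ricci flow solution on Nil³ × ℝ (class U1[2,1] with μ = 0). -/
theorem stmt8 (l1 l2 l3 l4 : ℝ)
    (hl1 : 0 < l1) (hl2 : 0 < l2) (hl3 : 0 < l3) (hl4 : 0 < l4)
    (A B C D : ℝ → ℝ)
    (hA : ∀ t, A t = (l1 ^ 3 + (3 * l1 ^ 2 * l2 / l4) * t) ^ ((1 : ℝ) / 3))
    (hB : ∀ t, B t = l1 * l2 / A t)
    (hC : ∀ t, C t = l3)
    (hD : ∀ t, D t = (l4 / l1) * A t) :
    (∀ t ≥ (0 : ℝ), 0 < A t ∧ 0 < B t ∧ 0 < C t ∧ 0 < D t) ∧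
    (A 0 = l1 ∧ B 0 = l2 ∧ C 0 = l3 ∧ D 0 = l4) ∧
    (∀ t ≥ (0 : ℝ),
      HasDerivAt A (B t / D t) t ∧
      HasDerivAt B (-(B t ^ 2) / (A t * D t)) t ∧
      HasDerivAt C 0 t ∧
      HasDerivAt D (B t / A t) t) ∧
    (∀ t ≥ (0 : ℝ), A t * B t = l1 * l2 ∧ A t / D t = l1 / l4) ∧
    Tendsto A atTop atTop ∧
    Tendsto B atTop (nhds 0) ∧
    Tendsto D atTop atTop := by
  have hk : 0 < 3 * l1 ^ 2 * l2 / l4 := by positivity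
  have hu : ∀ t ≥ (0 : ℝ), 0 < l1 ^ 3 + (3 * l1 ^ 2 * l2 / l4) * t := by
    intro t ht
    have : 0 < l1 ^ 3 := by positivity
    have := mul_nonneg hk.le ht
    linarith
  have hApos : ∀ t ≥ (0 : ℝ), 0 < A t := by
    intro t ht
    rw [hA]
    exact Real.rpow_pos_of_pos (hu t ht) _
  have hBf : B = fun t => l1 * l2 / A t := funext hB
  have hCf : C = fun _ => l3 := funext hC
  have hDf : D = fun t => (l4 / l1) * A t := funext hD
  have hA0 : A 0 = l1 := by
    rw [hA, mul_zero, add_zero, ← Real.rpow_natCast, ← Real.rpow_mul hl1.le]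
    norm_num
  have hdA : ∀ t ≥ (0 : ℝ), HasDerivAt A (B t / D t) t := by
    intro t ht
    have h1 : HasDerivAt (fun t : ℝ => l1 ^ 3 + (3 * l1 ^ 2 * l2 / l4) * t)
        (3 * l1 ^ 2 * l2 / l4) t := by
      simpa using ((hasDerivAt_id t).const_mul (3 * l1 ^ 2 * l2 / l4)).const_add (l1 ^ 3)
    have h2 := h1.rpow_const (p := (1 : ℝ) / 3) (Or.inl (hu t ht).ne')
    rw [← funext hA] at h2
    have h3 : (l1 ^ 3 + (3 * l1 ^ 2 * l2 / l4) * t) ^ ((1 : ℝ) / 3 - 1) = (A t ^ 2)⁻¹ := by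
      rw [hA, ← Real.rpow_natCast (_ ^ ((1 : ℝ) / 3)) 2, ← Real.rpow_mul (hu t ht).le, ← Real.rpow_neg (hu t ht).le]
      norm_num
    rw [h3] at h2
    refine h2.congr_deriv ?_
    rw [hB, hD]
    have := (hApos t ht).ne'
    field_simp
  have hAt : Tendsto A atTop atTop := by
    rw [funext hA]
    exact (tendsto_rpow_atTop (by norm_num : (0 : ℝ) < 1 / 3)).comp
      (tendsto_atTop_add_const_left _ _ (tendsto_id.const_mul_atTop hk))
  refine ⟨?_, ⟨hA0, ?_, hC 0, ?_⟩, ?_, ?_, hAt, ?_, ?_⟩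
  · intro t ht
    have := hApos t ht
    refine ⟨this, ?_, ?_, ?_⟩
    · rw [hB]; positivity
    · rw [hC]; exact hl3
    · rw [hD]; positivity
  · rw [hB, hA0]; field_simp
  · rw [hD, hA0]; field_simp
  · intro t ht
    have hne := (hApos t ht).ne'
    refine ⟨hdA t ht, ?_, ?_, ?_⟩
    · have h := (hasDerivAt_const t (l1 * l2)).fun_div (hdA t ht) hne
      rw [← hBf] at h
      refine h.congr_deriv ?_
      rw [hD, hB]
      field_simp
      try ring
    · rw [hCf]; exact hasDerivAt_const t l3
    · have h := (hdA t ht).const_mul (l4 / l1)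
      rw [← hDf] at h
      refine h.congr_deriv ?_
      rw [hD]
      field_simp
  · intro t ht
    have hne := (hApos t ht).ne'
    rw [hB, hD]
    constructor <;> field_simp
  · rw [hBf]; exact hAt.const_div_atTop _
  · rw [hDf]; exact hAt.const_mul_atTop (by positivity)
end

section
/- Let λ1, λ2, λ3, λ4 > 0. Suppose A, B, C, D : [0,∞) → ℝ are differentiable, strictly positive, and satisfy A' = B/D, B' = -B²/(AD), C' = 0, D' = 3 + B/A, with A(0) = λ1, B(0) = λ2, C(0) = λ3, D(0) = λ4.111Then for all t ≥ 0: A(t)B(t) = λ1λ2; the ratio A/B is nondecreasing (indeed (A/B)' = 2/D > 0); and 3t + λ4 ≤ D(t) ≤ (3 + λ2/λ1)t + λ4. -/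
theorem mono_aux (f f' : ℝ → ℝ) (h : ∀ t ≥ (0 : ℝ), HasDerivAt f (f' t) t)
    (h0 : ∀ t ≥ (0 : ℝ), 0 ≤ f' t) : MonotoneOn f (Set.Ici (0 : ℝ)) := by
  apply monotoneOn_of_deriv_nonneg (convex_Ici 0)
  · intro t ht
    exact (h t ht).continuousAt.continuousWithinAt
  · intro t ht
    rw [interior_Ici] at ht
    exact (h t (le_of_lt ht)).differentiableAt.differentiableWithinAt
  · intro t ht
    rw [interior_Ici] at ht
    rw [(h t (le_of_lt ht)).deriv]
    exact h0 t (le_of_lt ht)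

/-- Ricci flow on the class U1[2,1] with μ = 1 (family of Proposition 4):
`A·B` is conserved, `A/B` is nondecreasing with `(A/B)' = 2/D > 0`, and
`3t + λ4 ≤ D(t) ≤ (3 + λ2/λ1) t + λ4`. -/
theorem stmt9 (l1 l2 l3 l4 : ℝ)
    (hl1 : 0 < l1) (hl2 : 0 < l2) (hl3 : 0 < l3) (hl4 : 0 < l4)
    (A B C D : ℝ → ℝ)
    (hA0 : A 0 = l1) (hB0 : B 0 = l2) (hC0 : C 0 = l3) (hD0 : D 0 = l4)
    (hApos : ∀ t ≥ (0 : ℝ), 0 < A t)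
    (hBpos : ∀ t ≥ (0 : ℝ), 0 < B t)
    (hCpos : ∀ t ≥ (0 : ℝ), 0 < C t)
    (hDpos : ∀ t ≥ (0 : ℝ), 0 < D t)
    (hA' : ∀ t ≥ (0 : ℝ), HasDerivAt A (B t / D t) t)
    (hB' : ∀ t ≥ (0 : ℝ), HasDerivAt B (-(B t ^ 2) / (A t * D t)) t)
    (hC' : ∀ t ≥ (0 : ℝ), HasDerivAt C 0 t)
    (hD' : ∀ t ≥ (0 : ℝ), HasDerivAt D (3 + B t / A t) t) :
    (∀ t ≥ (0 : ℝ), A t * B t = l1 * l2) ∧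
    (∀ t ≥ (0 : ℝ), HasDerivAt (fun s => A s / B s) (2 / D t) t ∧ 0 < 2 / D t) ∧
    MonotoneOn (fun t => A t / B t) (Set.Ici (0 : ℝ)) ∧
    (∀ t ≥ (0 : ℝ), 3 * t + l4 ≤ D t ∧ D t ≤ (3 + l2 / l1) * t + l4) := by
  have hAB : ∀ t ≥ (0 : ℝ), HasDerivAt (fun s => A s * B s) 0 t := by
    intro t ht
    have h1 := hApos t ht
    have h2 := hDpos t ht
    refine ((hA' t ht).mul (hB' t ht)).congr_deriv ?_
    field_simp
    ring
  have hQ : ∀ t ≥ (0 : ℝ), HasDerivAt (fun s => A s / B s) (2 / D t) t := by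
    intro t ht
    have h1 := hApos t ht
    have h2 := hDpos t ht
    have h3 := hBpos t ht
    refine ((hA' t ht).div (hB' t ht) h3.ne').congr_deriv ?_
    field_simp
    ring
  have hQp : ∀ t ≥ (0 : ℝ), 0 < 2 / D t := fun t ht => div_pos two_pos (hDpos t ht)
  have hmono := mono_aux _ _ hQ (fun t ht => (hQp t ht).le)
  have hz : (0 : ℝ) ∈ Set.Ici (0 : ℝ) := Set.mem_Ici.2 le_rfl
  refine ⟨?_, fun t ht => ⟨hQ t ht, hQp t ht⟩, hmono, ?_⟩
  · intro t ht
    have m1 := mono_aux _ (fun _ => 0) hAB (fun _ _ => le_rfl) hz ht ht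
    have m2 := mono_aux (fun s => -(A s * B s)) (fun _ => 0)
      (fun t ht => (hAB t ht).neg.congr_deriv neg_zero) (fun _ _ => le_rfl) hz ht ht
    simp only [hA0, hB0] at m1 m2
    linarith
  · have hr : ∀ t ≥ (0 : ℝ), B t / A t ≤ l2 / l1 := by
      intro t ht
      have m := hmono hz ht ht
      have h1 := hApos t ht
      have h3 := hBpos t ht
      simp only [hA0, hB0] at m
      rw [div_le_div_iff₀ hl2 h3] at m
      rw [div_le_div_iff₀ h1 hl1]
      linarith
    intro t ht
    have m1 := mono_aux (fun s => D s - 3 * s) (fun s => 3 + B s / A s - 3 * 1)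
      (fun t ht => (hD' t ht).sub ((hasDerivAt_id t).const_mul 3))
      (fun t ht => by
        have := div_pos (hBpos t ht) (hApos t ht)
        linarith) hz ht ht
    have m2 := mono_aux (fun s => (3 + l2 / l1) * s - D s)
      (fun s => (3 + l2 / l1) * 1 - (3 + B s / A s))
      (fun t ht => ((hasDerivAt_id t).const_mul (3 + l2 / l1)).sub (hD' t ht))
      (fun t ht => by
        have := hr t ht
        linarith) hz ht ht
    simp only [hD0, mul_zero] at m1 m2
    constructor <;> linarith
end

section
/- Let λ1, λ2, λ3, λ4 > 0 and set k1 = 3(1 + λ1/λ2), k2 = λ1λ4/λ2, k3 = λ1·k2^{-1/k1}. Suppose A, B, C, D : [0,∞) → ℝ are differentiable, strictly positive, and satisfy A' = B/D, B' = -B²/(AD), C' = 0, D' = 3 + B/A, with A(0) = λ1, B(0) = λ2, C(0) = λ3, D(0) = λ4. Then for all t ≥ 0: A(t)D(t)/B(t) ≥ k1·t + k2, and λ1·√( (2λ2/(3λ1+λ2))·ln(1 + ((3λ1+λ2)/(λ1λ4))t) + 1 ) ≤ A(t) ≤ k3(k1t + k2)^{1/k1}, while B(t) = λ1λ2/A(t)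 satisfies the corresponding reciprocal bounds (λ1λ2/k3)(k1t + k2)^{-1/k1} ≤ B(t) ≤ λ2 / √( (2λ2/(3λ1+λ2))·ln(1 + ((3λ1+λ2)/(λ1λ4))t) + 1 ). In particular A(t) → ∞ and B(t) → 0⁺ as t → ∞. -/
open Filter

theorem mono_aux_s10 (f f' : ℝ → ℝ) (hf : ∀ t ≥ (0 : ℝ), HasDerivAt f (f' t) t)
    (hp : ∀ t ≥ (0 : ℝ), 0 ≤ f' t) : ∀ t ≥ (0 : ℝ), f 0 ≤ f t := by
  intro t ht
  have hm : MonotoneOn f (Set.Ici 0) := by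
    apply monotoneOn_of_deriv_nonneg (convex_Ici 0)
    · exact fun x hx => (hf x hx).continuousAt.continuousWithinAt
    · intro x hx
      rw [interior_Ici] at hx
      exact (hf x (le_of_lt hx)).differentiableAt.differentiableWithinAt
    · intro x hx
      rw [interior_Ici] at hx
      rw [(hf x (le_of_lt hx)).deriv]
      exact hp x (le_of_lt hx)
  exact hm (Set.mem_Ici.2 le_rfl) (Set.mem_Ici.2 ht) ht

/-- Ricci flow on the class U1[2,1] with μ = 1 (family of Proposition 4):
growth bounds for `A`, the reciprocal bounds for `B = λ1λ2/A`, and the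
asymptotics `A → ∞`, `B → 0⁺`. -/
theorem stmt10 (l1 l2 l3 l4 k1 k2 k3 : ℝ)
    (hl1 : 0 < l1) (hl2 : 0 < l2) (hl3 : 0 < l3) (hl4 : 0 < l4)
    (hk1 : k1 = 3 * (1 + l1 / l2))
    (hk2 : k2 = l1 * l4 / l2)
    (hk3 : k3 = l1 * k2 ^ (-(1 / k1)))
    (A B C D : ℝ → ℝ)
    (hA0 : A 0 = l1) (hB0 : B 0 = l2) (hC0 : C 0 = l3) (hD0 : D 0 = l4)
    (hApos : ∀ t ≥ (0 : ℝ), 0 < A t)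
    (hBpos : ∀ t ≥ (0 : ℝ), 0 < B t)
    (hCpos : ∀ t ≥ (0 : ℝ), 0 < C t)
    (hDpos : ∀ t ≥ (0 : ℝ), 0 < D t)
    (hA' : ∀ t ≥ (0 : ℝ), HasDerivAt A (B t / D t) t)
    (hB' : ∀ t ≥ (0 : ℝ), HasDerivAt B (-(B t ^ 2) / (A t * D t)) t)
    (hC' : ∀ t ≥ (0 : ℝ), HasDerivAt C 0 t)
    (hD' : ∀ t ≥ (0 : ℝ), HasDerivAt D (3 + B t / A t) t) :
    (∀ t ≥ (0 : ℝ), k1 * t + k2 ≤ A t * D t / B t) ∧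
    (∀ t ≥ (0 : ℝ),
      l1 * Real.sqrt ((2 * l2 / (3 * l1 + l2)) *
          Real.log (1 + ((3 * l1 + l2) / (l1 * l4)) * t) + 1) ≤ A t ∧
      A t ≤ k3 * (k1 * t + k2) ^ (1 / k1)) ∧
    (∀ t ≥ (0 : ℝ),
      B t = l1 * l2 / A t ∧
      (l1 * l2 / k3) * (k1 * t + k2) ^ (-(1 / k1)) ≤ B t ∧
      B t ≤ l2 / Real.sqrt ((2 * l2 / (3 * l1 + l2)) *
          Real.log (1 + ((3 * l1 + l2) / (l1 * l4)) * t) + 1)) ∧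
    Tendsto A atTop atTop ∧
    Tendsto B atTop (nhds 0) := by
  have hk1p : 0 < k1 := by rw [hk1]; positivity
  have hk2p : 0 < k2 := by rw [hk2]; positivity
  have hk3p : 0 < k3 := by rw [hk3]; positivity
  have hABd : ∀ t ≥ (0 : ℝ), HasDerivAt (fun t => A t * B t) 0 t := by
    intro t ht
    have hA := hApos t ht
    have hD := hDpos t ht
    refine HasDerivAt.congr_deriv ((hA' t ht).mul (hB' t ht)) ?_
    field_simp
    ring
  have hAB : ∀ t ≥ (0 : ℝ), A t * B t = l1 * l2 := by
    intro t ht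
    have h1 := mono_aux_s10 _ _ hABd (fun _ _ => le_rfl) t ht
    have h2 := mono_aux_s10 (fun t => -(A t * B t)) (fun _ => -0) (fun t ht => (hABd t ht).neg)
      (fun _ _ => by simp) t ht
    simp only [hA0, hB0] at h1 h2
    linarith
  have hP : ∀ t ≥ (0 : ℝ), l1 / l2 ≤ A t / B t := by
    intro t ht
    have h := mono_aux_s10 (fun t => A t / B t) (fun t => 2 / D t) (by
      intro t ht
      have hA := hApos t ht
      have hB := hBpos t ht
      have hD := hDpos t ht
      refine HasDerivAt.congr_deriv ((hA' t ht).div (hB' t ht) hB.ne') ?_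
      field_simp
      ring) (fun t ht => by have := hDpos t ht; positivity) t ht
    simpa only [hA0, hB0] using h
  have hE : ∀ t ≥ (0 : ℝ), k1 * t + k2 ≤ A t * D t / B t := by
    intro t ht
    have h := mono_aux_s10 (fun t => A t * D t / B t - k1 * t) (fun t => 3 + 3 * (A t / B t) - k1) (by
      intro t ht
      have hA := hApos t ht
      have hB := hBpos t ht
      have hD := hDpos t ht
      refine HasDerivAt.congr_deriv ((((hA' t ht).mul (hD' t ht)).div (hB' t ht) hB.ne').sub
        ((hasDerivAt_id t).const_mul k1)) ?_
      simp only [Pi.mul_apply]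
      field_simp
      ring) (fun t ht => by have := hP t ht; rw [hk1]; linarith) t ht
    simp only [hA0, hB0, hD0] at h
    rw [← hk2] at h
    linarith
  have hDle : ∀ t ≥ (0 : ℝ), D t ≤ (3 + l2 / l1) * t + l4 := by
    intro t ht
    have h := mono_aux_s10 (fun t => (3 + l2 / l1) * t - D t)
      (fun t => (3 + l2 / l1) * 1 - (3 + B t / A t))
      (fun t ht => ((hasDerivAt_id t).const_mul (3 + l2 / l1)).sub (hD' t ht)) (by
        intro t ht
        have hA := hApos t ht
        have hB := hBpos t ht
        have h1 := hP t ht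
        have : B t / A t ≤ l2 / l1 := by
          rw [div_le_div_iff₀ hl2 hB] at h1
          rw [div_le_div_iff₀ hA hl1]
          linarith
        linarith) t ht
    simp only [hD0] at h
    linarith
  have hup : ∀ t ≥ (0 : ℝ), A t ≤ k3 * (k1 * t + k2) ^ (1 / k1) := by
    intro t ht
    have h := mono_aux_s10 (fun t => Real.log (k1 * t + k2) / k1 - Real.log (A t))
      (fun t => (k1 * 1 / (k1 * t + k2)) / k1 - (B t / D t) / A t) (by
        intro t ht
        have hA := hApos t ht
        have hx : 0 < k1 * t + k2 := by positivity
        exact (((((hasDerivAt_id t).const_mul k1).add_const k2).log hx.ne').div_const k1).sub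
          ((hA' t ht).log hA.ne')) (by
        intro t ht
        have hA := hApos t ht
        have hB := hBpos t ht
        have hD := hDpos t ht
        have hx : 0 < k1 * t + k2 := by positivity
        have e1 : (k1 * 1 / (k1 * t + k2)) / k1 = 1 / (k1 * t + k2) := by field_simp
        have e2 : (B t / D t) / A t = 1 / (A t * D t / B t) := by field_simp
        rw [e1, e2, sub_nonneg]
        exact one_div_le_one_div_of_le hx (hE t ht)) t ht
    simp only [hA0, mul_zero, zero_add] at h
    have hx : 0 < k1 * t + k2 := by positivity
    have hA := hApos t ht
    rw [← Real.log_le_log_iff hA (by positivity), hk3, Real.log_mul (by positivity) (by positivity),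
      Real.log_mul (by positivity) (by positivity), Real.log_rpow hk2p, Real.log_rpow hx]
    have e : ∀ y : ℝ, y / k1 = 1 / k1 * y := fun y => by ring
    rw [e (Real.log k2), e (Real.log (k1 * t + k2))] at h
    linarith
  have hlog : ∀ t ≥ (0 : ℝ), 0 ≤ Real.log (1 + ((3 * l1 + l2) / (l1 * l4)) * t) := by
    intro t ht
    apply Real.log_nonneg
    have : 0 ≤ ((3 * l1 + l2) / (l1 * l4)) * t := by positivity
    linarith
  have hS : ∀ t ≥ (0 : ℝ), 0 < (2 * l2 / (3 * l1 + l2)) *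
      Real.log (1 + ((3 * l1 + l2) / (l1 * l4)) * t) + 1 := by
    intro t ht
    have := hlog t ht
    positivity
  have hlow : ∀ t ≥ (0 : ℝ), l1 * Real.sqrt ((2 * l2 / (3 * l1 + l2)) *
          Real.log (1 + ((3 * l1 + l2) / (l1 * l4)) * t) + 1) ≤ A t := by
    intro t ht
    have h := mono_aux_s10 (fun t => A t * A t - l1 ^ 2 * ((2 * l2 / (3 * l1 + l2)) *
          Real.log (1 + ((3 * l1 + l2) / (l1 * l4)) * t)))
      (fun t => (B t / D t * A t + A t * (B t / D t)) - l1 ^ 2 * ((2 * l2 / (3 * l1 + l2)) *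
        (((3 * l1 + l2) / (l1 * l4)) * 1 / (1 + ((3 * l1 + l2) / (l1 * l4)) * t)))) (by
        intro t ht
        have hx : 0 < 1 + ((3 * l1 + l2) / (l1 * l4)) * t := by positivity
        exact ((hA' t ht).mul (hA' t ht)).sub
          ((((((hasDerivAt_id t).const_mul _).const_add 1).log hx.ne').const_mul _).const_mul _)) (by
        intro t ht
        have hD := hDpos t ht
        have e1 : B t / D t * A t + A t * (B t / D t) = 2 * l1 * l2 / D t := by
          have := hAB t ht
          rw [show B t / D t * A t + A t * (B t / D t) = 2 * (A t * B t) / D t by ring, this]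
          ring
        have e2 : l1 ^ 2 * ((2 * l2 / (3 * l1 + l2)) *
            (((3 * l1 + l2) / (l1 * l4)) * 1 / (1 + ((3 * l1 + l2) / (l1 * l4)) * t)))
            = 2 * l1 * l2 / ((3 + l2 / l1) * t + l4) := by
          have hx : 0 < 1 + ((3 * l1 + l2) / (l1 * l4)) * t := by positivity
          have hy : 0 < (3 + l2 / l1) * t + l4 := by positivity
          have : (3 + l2 / l1) * t + l4 = l4 * (1 + ((3 * l1 + l2) / (l1 * l4)) * t) := by
            field_simp
            ring
          rw [this]
          generalize 1 + ((3 * l1 + l2) / (l1 * l4)) * t = X at hx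
          field_simp
        rw [e1, e2, sub_nonneg]
        exact div_le_div_of_nonneg_left (by positivity) hD (hDle t ht)) t ht
    simp only [hA0, mul_zero, add_zero, Real.log_one, sub_zero] at h
    have hA := hApos t ht
    refine (sq_le_sq₀ (by positivity) hA.le).1 ?_
    rw [mul_pow, Real.sq_sqrt (hS t ht).le]
    nlinarith
  have hBA : ∀ t ≥ (0 : ℝ), B t = l1 * l2 / A t := by
    intro t ht
    rw [eq_div_iff (hApos t ht).ne', mul_comm, hAB t ht]
  have hAinf : Tendsto A atTop atTop := by
    apply tendsto_atTop_mono' atTop (f₁ := fun t => l1 * Real.sqrt ((2 * l2 / (3 * l1 + l2)) *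
          Real.log (1 + ((3 * l1 + l2) / (l1 * l4)) * t) + 1))
    · filter_upwards [eventually_ge_atTop 0] with t ht using hlow t ht
    · apply Tendsto.const_mul_atTop hl1
      apply Real.tendsto_sqrt_atTop.comp
      apply tendsto_atTop_add_const_right
      apply Tendsto.const_mul_atTop (by positivity)
      apply Real.tendsto_log_atTop.comp
      apply tendsto_atTop_add_const_left
      exact Tendsto.const_mul_atTop (by positivity) tendsto_id
  refine ⟨hE, fun t ht => ⟨hlow t ht, hup t ht⟩, fun t ht => ⟨hBA t ht, ?_, ?_⟩, hAinf, ?_⟩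
  · have hx : 0 < k1 * t + k2 := by positivity
    rw [hBA t ht, Real.rpow_neg hx.le, ← div_eq_mul_inv, div_div]
    exact div_le_div_of_nonneg_left (by positivity) (hApos t ht) (hup t ht)
  · have hs := Real.sqrt_pos.2 (hS t ht)
    rw [hBA t ht, ← mul_div_mul_left l2 _ hl1.ne']
    exact div_le_div_of_nonneg_left (by positivity) (by positivity) (hlow t ht)
  · have h : Tendsto (fun t => l1 * l2 / A t) atTop (nhds 0) := hAinf.const_div_atTop _
    refine h.congr' ?_
    filter_upwards [eventually_ge_atTop 0] with t ht using (hBA t ht).symm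
end

section
/- Let λ1, λ2, λ3, λ4 > 0 and set E0 = λ2/(λ1λ4), F0 = λ3/(λ2λ4). Define, for t ≥ 0: A(t) = λ1(3E0t + 1)^{1/3}, B(t) = λ2(3E0t + 1)^{-1/3}(3F0t + 1)^{1/3}, C(t) = λ3(3F0t + 1)^{-1/3}, D(t) = λ4(3E0t + 1)^{1/3}(3F0t + 1)^{1/3}. Then A, B, C, D are strictly positive, take the values λ1, λ2, λ3, λ4 at t = 0, and solve the system A' = B/D, B' = (AC - B²)/(AD), C' = -C²/(BD), D' = B/A + C/B on [0,∞). Moreover A(t)B(t)C(t) = λ1λ2λ3 and A(t)/(C(t)D(t)) = λ1/(λ3λ4) for all t ≥ 0, the functions E = B/(AD) and F = C/(BD) satisfy E' = -3E² and F' = -3F², and as t → ∞ one has A(t) → ∞, B(t) → (λ1λ2λ3)^{1/3}, C(t) → 0⁺, D(t) → ∞. -/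
open Filter

lemma aux_deriv (a t : ℝ) (h : 0 < 3 * a * t + 1) :
    HasDerivAt (fun s : ℝ => (3 * a * s + 1) ^ ((1 : ℝ) / 3))
      (a / ((3 * a * t + 1) ^ ((1 : ℝ) / 3)) ^ 2) t ∧
    HasDerivAt (fun s : ℝ => (3 * a * s + 1) ^ (-(1 : ℝ) / 3))
      (-a / ((3 * a * t + 1) ^ ((1 : ℝ) / 3)) ^ 4) t := by
  have hd : HasDerivAt (fun s : ℝ => 3 * a * s + 1) (3 * a) t := by
    simpa using ((hasDerivAt_id t).const_mul (3 * a)).add_const 1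
  constructor
  · convert hd.rpow_const (p := (1 : ℝ) / 3) (Or.inl h.ne') using 1
    rw [← Real.rpow_natCast, ← Real.rpow_mul h.le, div_eq_mul_inv, ← Real.rpow_neg h.le]
    norm_num
    left
    ring
  · convert hd.rpow_const (p := -(1 : ℝ) / 3) (Or.inl h.ne') using 1
    rw [← Real.rpow_natCast, ← Real.rpow_mul h.le, div_eq_mul_inv, ← Real.rpow_neg h.le]
    norm_num
    left
    ring

lemma aux_inv (x : ℝ) (h : 0 < x) :
    x ^ (-(1 : ℝ) / 3) = (x ^ ((1 : ℝ) / 3))⁻¹ := by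
  rw [← Real.rpow_neg h.le]; norm_num

lemma aux_top (a : ℝ) (ha : 0 < a) : Tendsto (fun s : ℝ => 3 * a * s + 1) atTop atTop :=
  tendsto_atTop_add_const_right _ _ (tendsto_id.const_mul_atTop (by positivity))

lemma aux_ratio (a b : ℝ) (ha : 0 < a) :
    Tendsto (fun s : ℝ => (3 * b * s + 1) / (3 * a * s + 1)) atTop (nhds (b / a)) := by
  have h1 : Tendsto (fun s : ℝ => b / a + (1 - b / a) * (3 * a * s + 1)⁻¹) atTop
      (nhds (b / a + (1 - b / a) * 0)) :=
    ((tendsto_inv_atTop_zero.comp (aux_top a ha)).const_mul _).const_add _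
  rw [mul_zero, add_zero] at h1
  refine h1.congr' ?_
  filter_upwards [eventually_ge_atTop 0] with s hs
  have : 0 < 3 * a * s + 1 := by positivity
  field_simp
  ring

/-- Explicit Ricci flow solution on Nil⁴ (class U1[3]). -/
theorem stmt11 (l1 l2 l3 l4 E0 F0 : ℝ)
    (hl1 : 0 < l1) (hl2 : 0 < l2) (hl3 : 0 < l3) (hl4 : 0 < l4)
    (hE0 : E0 = l2 / (l1 * l4)) (hF0 : F0 = l3 / (l2 * l4))
    (A B C D : ℝ → ℝ)
    (hA : ∀ t, A t = l1 * (3 * E0 * t + 1) ^ ((1 : ℝ) / 3))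
    (hB : ∀ t, B t = l2 * (3 * E0 * t + 1) ^ (-(1 : ℝ) / 3) *
      (3 * F0 * t + 1) ^ ((1 : ℝ) / 3))
    (hC : ∀ t, C t = l3 * (3 * F0 * t + 1) ^ (-(1 : ℝ) / 3))
    (hD : ∀ t, D t = l4 * (3 * E0 * t + 1) ^ ((1 : ℝ) / 3) *
      (3 * F0 * t + 1) ^ ((1 : ℝ) / 3)) :
    (∀ t ≥ (0 : ℝ), 0 < A t ∧ 0 < B t ∧ 0 < C t ∧ 0 < D t) ∧
    (A 0 = l1 ∧ B 0 = l2 ∧ C 0 = l3 ∧ D 0 = l4) ∧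
    (∀ t ≥ (0 : ℝ),
      HasDerivAt A (B t / D t) t ∧
      HasDerivAt B ((A t * C t - B t ^ 2) / (A t * D t)) t ∧
      HasDerivAt C (-(C t ^ 2) / (B t * D t)) t ∧
      HasDerivAt D (B t / A t + C t / B t) t) ∧
    (∀ t ≥ (0 : ℝ), A t * B t * C t = l1 * l2 * l3 ∧
      A t / (C t * D t) = l1 / (l3 * l4)) ∧
    (∀ t ≥ (0 : ℝ),
      HasDerivAt (fun s => B s / (A s * D s)) (-3 * (B t / (A t * D t)) ^ 2) t ∧
      HasDerivAt (fun s => C s / (B s * D s)) (-3 * (C t / (B t * D t)) ^ 2) t) ∧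
    Tendsto A atTop atTop ∧
    Tendsto B atTop (nhds ((l1 * l2 * l3) ^ ((1 : ℝ) / 3))) ∧
    Tendsto C atTop (nhds 0) ∧
    Tendsto D atTop atTop := by
  have hE : 0 < E0 := by rw [hE0]; positivity
  have hF : 0 < F0 := by rw [hF0]; positivity
  have hE' : E0 * (l1 * l4) = l2 := by rw [hE0]; field_simp
  have hF' : F0 * (l2 * l4) = l3 := by rw [hF0]; field_simp
  have hxE : ∀ t ≥ (0 : ℝ), 0 < 3 * E0 * t + 1 := fun t ht => by positivity
  have hxF : ∀ t ≥ (0 : ℝ), 0 < 3 * F0 * t + 1 := fun t ht => by positivity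
  have hpos : ∀ t ≥ (0 : ℝ), 0 < A t ∧ 0 < B t ∧ 0 < C t ∧ 0 < D t := by
    intro t ht
    have := hxE t ht
    have := hxF t ht
    rw [hA, hB, hC, hD]
    refine ⟨?_, ?_, ?_, ?_⟩ <;> positivity
  have hder : ∀ t ≥ (0 : ℝ),
      HasDerivAt A (B t / D t) t ∧
      HasDerivAt B ((A t * C t - B t ^ 2) / (A t * D t)) t ∧
      HasDerivAt C (-(C t ^ 2) / (B t * D t)) t ∧
      HasDerivAt D (B t / A t + C t / B t) t := by
    intro t ht
    obtain ⟨p1, p2⟩ := aux_deriv E0 t (hxE t ht)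
    obtain ⟨q1, q2⟩ := aux_deriv F0 t (hxF t ht)
    have ip := aux_inv _ (hxE t ht)
    have iq := aux_inv _ (hxF t ht)
    have hp := Real.rpow_pos_of_pos (hxE t ht) ((1 : ℝ) / 3)
    have hq := Real.rpow_pos_of_pos (hxF t ht) ((1 : ℝ) / 3)
    have dA := p1.const_mul l1
    have dB := (p2.const_mul l2).mul q1
    have dC := q2.const_mul l3
    have dD := (p1.const_mul l4).mul q1
    rw [hA t, hB t, hC t, hD t, funext hA, funext hB, funext hC, funext hD]
    rw [ip, iq]
    rw [ip] at dB
    generalize (3 * E0 * t + 1) ^ ((1 : ℝ) / 3) = p at *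
    generalize (3 * F0 * t + 1) ^ ((1 : ℝ) / 3) = q at *
    refine ⟨dA.congr_deriv ?_, dB.congr_deriv ?_, dC.congr_deriv ?_, dD.congr_deriv ?_⟩ <;>
    · simp only [hF0, hE0]
      field_simp
      try ring
  refine ⟨hpos, ?_, hder, ?_, ?_, ?_, ?_, ?_, ?_⟩
  · simp [hA, hB, hC, hD]
  · intro t ht
    have ip := aux_inv _ (hxE t ht)
    have iq := aux_inv _ (hxF t ht)
    have hp := Real.rpow_pos_of_pos (hxE t ht) ((1 : ℝ) / 3)
    have hq := Real.rpow_pos_of_pos (hxF t ht) ((1 : ℝ) / 3)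
    rw [hA t, hB t, hC t, hD t, ip, iq]
    constructor <;> field_simp
  · intro t ht
    obtain ⟨a, b, c, d⟩ := hpos t ht
    obtain ⟨dA, dB, dC, dD⟩ := hder t ht
    constructor
    · refine (dB.div (dA.mul dD) (by simp; constructor <;> positivity)).congr_deriv ?_
      simp only [Pi.mul_apply]
      field_simp
      ring
    · refine (dC.div (dB.mul dD) (by simp; constructor <;> positivity)).congr_deriv ?_
      simp only [Pi.mul_apply]
      field_simp
      ring
  · rw [funext hA]
    exact ((tendsto_rpow_atTop (by norm_num)).comp (aux_top E0 hE)).const_mul_atTop hl1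
  · have h1 := ((aux_ratio E0 F0 hE).rpow_const (p := (1 : ℝ) / 3)
      (Or.inr (by norm_num))).const_mul l2
    have h2 : l2 * (F0 / E0) ^ ((1 : ℝ) / 3) = (l1 * l2 * l3) ^ ((1 : ℝ) / 3) := by
      have h3 : l1 * l2 * l3 = l2 ^ 3 * (F0 / E0) := by
        rw [hE0, hF0]; field_simp
      rw [h3, Real.mul_rpow (by positivity) (by positivity), ← Real.rpow_natCast,
        ← Real.rpow_mul hl2.le]
      norm_num
    rw [h2] at h1
    refine h1.congr' ?_
    filter_upwards [eventually_ge_atTop 0] with s hs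
    rw [hB, aux_inv _ (hxE s hs), Real.div_rpow (hxF s hs).le (hxE s hs).le]
    ring
  · rw [funext hC]
    have h := ((tendsto_rpow_neg_atTop (y := (1 : ℝ) / 3) (by norm_num)).comp
      (aux_top F0 hF)).const_mul l3
    rw [mul_zero] at h
    refine h.congr fun s => ?_
    simp only [Function.comp]
    norm_num
  · rw [funext hD]
    exact (((tendsto_rpow_atTop (by norm_num)).comp (aux_top E0 hE)).const_mul_atTop
      hl4).atTop_mul_atTop₀ ((tendsto_rpow_atTop (by norm_num)).comp (aux_top F0 hF))
end

section
/- Let λ1, λ2, λ3, λ4 > 0. Suppose A, B, C, D : [0,∞) → ℝ are differentiable, strictly positive, and satisfy A' = B/C + C/B + 2, B' = C/A + D/C - B²/(AC), C' = B/A + D/B - C²/(AB), D' = -D²/(BC), with A(0) = λ1, B(0) = λ2, C(0) = λ3, D(0) = λ4. Then for all t ≥ 0: B(t)C(t)D(t)² = λ2λ3λ4², A(t)D(t)(B(t) - C(t)) = λ1λ4(λ2 - λ3), and D(t) = λ4(1 + (3λ4/(λ2λ3))t)^{-1/3}. -/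
theorem const_of_deriv_zero_aux (f : ℝ → ℝ) (h : ∀ t ≥ (0 : ℝ), HasDerivAt f 0 t) :
    ∀ t ≥ (0 : ℝ), f t = f 0 := by
  intro t ht
  refine constant_of_has_deriv_right_zero (a := 0) (b := t) ?_ ?_ t ⟨ht, le_rfl⟩
  · intro x hx
    exact (h x hx.1).continuousAt.continuousWithinAt
  · intro x hx
    exact (h x hx.1).hasDerivWithinAt

/-- Ricci flow on Sol₁⁴ (class U3I0, case (i) of Proposition 6): conserved
quantities `BCD² = λ2λ3λ4²`, `AD(B−C) = λ1λ4(λ2−λ3)`, and the explicit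
formula for `D`. -/
theorem stmt12 (l1 l2 l3 l4 : ℝ)
    (hl1 : 0 < l1) (hl2 : 0 < l2) (hl3 : 0 < l3) (hl4 : 0 < l4)
    (A B C D : ℝ → ℝ)
    (hA0 : A 0 = l1) (hB0 : B 0 = l2) (hC0 : C 0 = l3) (hD0 : D 0 = l4)
    (hApos : ∀ t ≥ (0 : ℝ), 0 < A t)
    (hBpos : ∀ t ≥ (0 : ℝ), 0 < B t)
    (hCpos : ∀ t ≥ (0 : ℝ), 0 < C t)
    (hDpos : ∀ t ≥ (0 : ℝ), 0 < D t)
    (hA' : ∀ t ≥ (0 : ℝ), HasDerivAt A (B t / C t + C t / B t + 2) t)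
    (hB' : ∀ t ≥ (0 : ℝ), HasDerivAt B
      (C t / A t + D t / C t - B t ^ 2 / (A t * C t)) t)
    (hC' : ∀ t ≥ (0 : ℝ), HasDerivAt C
      (B t / A t + D t / B t - C t ^ 2 / (A t * B t)) t)
    (hD' : ∀ t ≥ (0 : ℝ), HasDerivAt D (-(D t ^ 2) / (B t * C t)) t) :
    (∀ t ≥ (0 : ℝ), B t * C t * D t ^ 2 = l2 * l3 * l4 ^ 2) ∧
    (∀ t ≥ (0 : ℝ), A t * D t * (B t - C t) = l1 * l4 * (l2 - l3)) ∧
    (∀ t ≥ (0 : ℝ), D t = l4 * (1 + (3 * l4 / (l2 * l3)) * t) ^ (-(1 : ℝ) / 3)) := by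
  have h1 : ∀ t ≥ (0 : ℝ), B t * C t * D t ^ 2 = l2 * l3 * l4 ^ 2 := by
    have := const_of_deriv_zero_aux (fun t => B t * C t * D t ^ 2) (by
      intro t ht
      have a := (hApos t ht).ne'
      have b := (hBpos t ht).ne'
      have c := (hCpos t ht).ne'
      refine (((hB' t ht).mul (hC' t ht)).mul ((hD' t ht).pow 2)).congr_deriv ?_
      simp only [Pi.mul_apply, Pi.pow_apply]
      field_simp
      push_cast
      ring)
    intro t ht
    have h := this t ht
    simpa only [hB0, hC0, hD0] using h
  refine ⟨h1, ?_, ?_⟩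
  · have := const_of_deriv_zero_aux (fun t => A t * D t * (B t - C t)) (by
      intro t ht
      have a := (hApos t ht).ne'
      have b := (hBpos t ht).ne'
      have c := (hCpos t ht).ne'
      refine (((hA' t ht).mul (hD' t ht)).mul ((hB' t ht).sub (hC' t ht))).congr_deriv ?_
      simp only [Pi.mul_apply, Pi.sub_apply]
      field_simp
      ring)
    intro t ht
    have h := this t ht
    simpa only [hA0, hB0, hC0, hD0] using h
  · have := const_of_deriv_zero_aux
      (fun t => (D t ^ 3)⁻¹ - (3 / (l2 * l3 * l4 ^ 2)) * t) (by
      intro t ht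
      have b := (hBpos t ht).ne'
      have c := (hCpos t ht).ne'
      have d := (hDpos t ht).ne'
      refine ((((hD' t ht).pow 3).inv (pow_ne_zero 3 d)).sub
        ((hasDerivAt_id t).const_mul (3 / (l2 * l3 * l4 ^ 2)))).congr_deriv ?_
      rw [← h1 t ht]
      simp only [Pi.pow_apply]
      field_simp
      push_cast
      ring)
    intro t ht
    have h := this t ht
    simp only [hD0, mul_zero, sub_zero] at h
    have d := hDpos t ht
    have hp : 0 < 1 + (3 * l4 / (l2 * l3)) * t := by positivity
    have e : 1 + (3 * l4 / (l2 * l3)) * t = (l4 / D t) ^ (3 : ℝ) := by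
      have h2 : (D t ^ 3)⁻¹ = (l4 ^ 3)⁻¹ + (3 / (l2 * l3 * l4 ^ 2)) * t := by linarith
      have h3 : (l4 / D t) ^ (3 : ℝ) = l4 ^ 3 * (D t ^ 3)⁻¹ := by
        rw [show (3 : ℝ) = ((3 : ℕ) : ℝ) by norm_num, Real.rpow_natCast, div_pow, div_eq_mul_inv]
      rw [h3, h2]
      field_simp
    rw [e, ← Real.rpow_mul (by positivity)]
    norm_num
    rw [Real.rpow_neg_one]
    field_simp
end

section
/- Let α ∈ ℝ with α² < 1. Suppose A, B, C, D : [0,∞) → ℝ are differentiable, strictly positive, and satisfy A' = (B² + 2(1+α²)BC + (1-α²)²C²)/(BC), B' = (AD - B² + (1-α²)²C²)/(AC), C' = (AD + B² - (1-α²)²C²)/(AB), D' = -D²/(BC). Then the function B - (1-α²)C satisfies (B - (1-α²)C)'(t) = ((A(t)D(t) - (B(t) + (1-α²)C(t))²)/(A(t)B(t)C(t)))·(B(t) - (1-α²)C(t)) for all t ≥ 0. In particular, if B(0) = (1-α²)C(0), then B(t) = (1-α²)C(t) for all t ≥ 0. -/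
/-- Ricci flow on Sol₁⁴ (class U3I0, case (ii) of Proposition 6): the relation
`B = (1 - α²) C` is preserved by the flow. -/
theorem stmt14 (α : ℝ) (hα : α ^ 2 < 1)
    (A B C D : ℝ → ℝ)
    (hApos : ∀ t ≥ (0 : ℝ), 0 < A t)
    (hBpos : ∀ t ≥ (0 : ℝ), 0 < B t)
    (hCpos : ∀ t ≥ (0 : ℝ), 0 < C t)
    (hDpos : ∀ t ≥ (0 : ℝ), 0 < D t)
    (hA' : ∀ t ≥ (0 : ℝ), HasDerivAt A
      ((B t ^ 2 + 2 * (1 + α ^ 2) * B t * C t + (1 - α ^ 2) ^ 2 * C t ^ 2) /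
        (B t * C t)) t)
    (hB' : ∀ t ≥ (0 : ℝ), HasDerivAt B
      ((A t * D t - B t ^ 2 + (1 - α ^ 2) ^ 2 * C t ^ 2) / (A t * C t)) t)
    (hC' : ∀ t ≥ (0 : ℝ), HasDerivAt C
      ((A t * D t + B t ^ 2 - (1 - α ^ 2) ^ 2 * C t ^ 2) / (A t * B t)) t)
    (hD' : ∀ t ≥ (0 : ℝ), HasDerivAt D (-(D t ^ 2) / (B t * C t)) t) :
    (∀ t ≥ (0 : ℝ), HasDerivAt (fun s => B s - (1 - α ^ 2) * C s)
      ((A t * D t - (B t + (1 - α ^ 2) * C t) ^ 2) / (A t * B t * C t) *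
        (B t - (1 - α ^ 2) * C t)) t) ∧
    (B 0 = (1 - α ^ 2) * C 0 → ∀ t ≥ (0 : ℝ), B t = (1 - α ^ 2) * C t) := by
  have key : ∀ t ≥ (0 : ℝ), HasDerivAt (fun s => B s - (1 - α ^ 2) * C s)
      ((A t * D t - (B t + (1 - α ^ 2) * C t) ^ 2) / (A t * B t * C t) *
        (B t - (1 - α ^ 2) * C t)) t := by
    intro t ht
    have h := (hB' t ht).sub ((hC' t ht).const_mul (1 - α ^ 2))
    have hA := (hApos t ht).ne'
    have hB := (hBpos t ht).ne'
    have hC := (hCpos t ht).ne'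
    refine h.congr_deriv ?_
    field_simp
    ring
  refine ⟨key, fun h0 T hT => ?_⟩
  have cont : ∀ {F F' : ℝ → ℝ}, (∀ t ≥ (0 : ℝ), HasDerivAt F (F' t) t) →
      ContinuousOn F (Set.Icc 0 T) :=
    fun h t ht => (h t ht.1).continuousAt.continuousWithinAt
  have cA := cont hA'
  have cB := cont hB'
  have cC := cont hC'
  have cD := cont hD'
  have cg : ContinuousOn (fun t => (A t * D t - (B t + (1 - α ^ 2) * C t) ^ 2) /
      (A t * B t * C t)) (Set.Icc 0 T) := by
    refine ContinuousOn.div (by fun_prop) (by fun_prop) fun t ht => ?_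
    have hA := hApos t ht.1
    have hB := hBpos t ht.1
    have hC := hCpos t ht.1
    positivity
  obtain ⟨K, hK⟩ := isCompact_Icc.exists_bound_of_continuousOn cg
  have hb := norm_le_gronwallBound_of_norm_deriv_right_le (δ := 0) (K := K) (ε := 0)
    (cont key) (fun t ht => (key t ht.1).hasDerivWithinAt) (by simp [h0])
    (fun t ht => by
      rw [norm_mul, add_zero]
      exact mul_le_mul_of_nonneg_right (hK t ⟨ht.1, ht.2.le⟩) (norm_nonneg _))
    T ⟨hT, le_refl T⟩
  rw [gronwallBound_ε0_δ0] at hb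
  exact sub_eq_zero.mp (norm_le_zero_iff.mp hb)
end

section
/- Let α ∈ ℝ with α² < 1, and let λ1, λ2, λ4 > 0; set λ3 = λ2/(1-α²). Define, for t ≥ 0: A(t) = λ1 + 4t, B(t) = (λ2³ + 3(1-α²)λ2λ4·t)^{1/3}, C(t) = B(t)/(1-α²), D(t) = λ2λ4 / B(t). Then A, B, C, D are strictly positive, take the values λ1, λ2, λ3, λ4 at t = 0, satisfy B(t)D(t) = λ2λ4 and B(t) = (1-α²)C(t) for all t ≥ 0, and solve the system A' = (B² + 2(1+α²)BC + (1-α²)²C²)/(BC), B' = (AD - B² + (1-α²)²C²)/(AC), C' = (AD + B² - (1-α²)²C²)/(AB), D' = -D²/(BC) on [0,∞). As t → ∞, A(t), B(t), C(t) → ∞ and D(t) → 0⁺. -/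
open Filter

/-- Explicit Ricci flow solution on Sol₁⁴ (class U3I0, case (ii) of
Proposition 6, with the preserved constraint `B = (1-α²)C`). -/
theorem stmt15 (α l1 l2 l3 l4 : ℝ) (hα : α ^ 2 < 1)
    (hl1 : 0 < l1) (hl2 : 0 < l2) (hl4 : 0 < l4)
    (hl3 : l3 = l2 / (1 - α ^ 2))
    (A B C D : ℝ → ℝ)
    (hA : ∀ t, A t = l1 + 4 * t)
    (hB : ∀ t, B t = (l2 ^ 3 + 3 * (1 - α ^ 2) * l2 * l4 * t) ^ ((1 : ℝ) / 3))
    (hC : ∀ t, C t = B t / (1 - α ^ 2))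
    (hD : ∀ t, D t = l2 * l4 / B t) :
    (∀ t ≥ (0 : ℝ), 0 < A t ∧ 0 < B t ∧ 0 < C t ∧ 0 < D t) ∧
    (A 0 = l1 ∧ B 0 = l2 ∧ C 0 = l3 ∧ D 0 = l4) ∧
    (∀ t ≥ (0 : ℝ), B t * D t = l2 * l4 ∧ B t = (1 - α ^ 2) * C t) ∧
    (∀ t ≥ (0 : ℝ),
      HasDerivAt A
        ((B t ^ 2 + 2 * (1 + α ^ 2) * B t * C t + (1 - α ^ 2) ^ 2 * C t ^ 2) /
          (B t * C t)) t ∧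
      HasDerivAt B
        ((A t * D t - B t ^ 2 + (1 - α ^ 2) ^ 2 * C t ^ 2) / (A t * C t)) t ∧
      HasDerivAt C
        ((A t * D t + B t ^ 2 - (1 - α ^ 2) ^ 2 * C t ^ 2) / (A t * B t)) t ∧
      HasDerivAt D (-(D t ^ 2) / (B t * C t)) t) ∧
    Tendsto A atTop atTop ∧
    Tendsto B atTop atTop ∧
    Tendsto C atTop atTop ∧
    Tendsto D atTop (nhds 0) := by
  obtain ⟨k, hk⟩ : ∃ k, k = 1 - α ^ 2 := ⟨_, rfl⟩
  have ha : α ^ 2 = 1 - k := by linarith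
  have hk0 : 0 < k := by linarith
  rw [← hk] at hl3
  simp only [← hk] at hB hC ⊢
  have hx : ∀ t ≥ (0 : ℝ), 0 < l2 ^ 3 + 3 * k * l2 * l4 * t := by
    intro t ht
    have : 0 ≤ 3 * k * l2 * l4 * t := by positivity
    have : 0 < l2 ^ 3 := by positivity
    linarith
  have hBpos : ∀ t ≥ (0 : ℝ), 0 < B t := by
    intro t ht
    rw [hB]
    exact Real.rpow_pos_of_pos (hx t ht) _
  have hB3 : ∀ t ≥ (0 : ℝ), B t ^ 3 = l2 ^ 3 + 3 * k * l2 * l4 * t := by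
    intro t ht
    rw [hB, ← Real.rpow_natCast, ← Real.rpow_mul (hx t ht).le]
    norm_num
  have hApos : ∀ t ≥ (0 : ℝ), 0 < A t := by
    intro t ht
    rw [hA]
    linarith
  have hB0 : B 0 = l2 := by
    have h := hB3 0 le_rfl
    rw [mul_zero, add_zero] at h
    exact (pow_left_inj₀ (hBpos 0 le_rfl).le hl2.le (by norm_num)).1 h
  have hBd : ∀ t ≥ (0 : ℝ), HasDerivAt B (k * l2 * l4 / B t ^ 2) t := by
    intro t ht
    have h1 : HasDerivAt (fun t : ℝ => l2 ^ 3 + 3 * k * l2 * l4 * t)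
        (3 * k * l2 * l4) t := by
      simpa using ((hasDerivAt_id t).const_mul (3 * k * l2 * l4)).const_add (l2 ^ 3)
    have h2 := h1.rpow_const (p := (1 : ℝ) / 3) (Or.inl (hx t ht).ne')
    have hfun : B = fun t => (l2 ^ 3 + 3 * k * l2 * l4 * t) ^ ((1 : ℝ) / 3) := funext hB
    rw [← hfun, Real.rpow_sub_one (hx t ht).ne', ← hB t, ← hB3 t ht] at h2
    have hb := hBpos t ht
    convert h2 using 1
    field_simp
  have hBt : Tendsto B atTop atTop := by
    have hfun : B = fun t => (l2 ^ 3 + 3 * k * l2 * l4 * t) ^ ((1 : ℝ) / 3) := funext hB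
    rw [hfun]
    refine (tendsto_rpow_atTop (by norm_num : (0 : ℝ) < 1 / 3)).comp ?_
    exact tendsto_atTop_add_const_left _ _
      (tendsto_id.const_mul_atTop (by positivity : 0 < 3 * k * l2 * l4))
  have hCf : C = fun t => B t / k := funext hC
  have hDf : D = fun t => l2 * l4 / B t := funext hD
  have hAf : A = fun t => l1 + 4 * t := funext hA
  refine ⟨?_, ?_, ?_, ?_, ?_, hBt, ?_, ?_⟩
  · intro t ht
    have hb := hBpos t ht
    refine ⟨hApos t ht, hb, ?_, ?_⟩
    · rw [hC]; positivity
    · rw [hD]; positivity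
  · refine ⟨by rw [hA]; ring, hB0, by rw [hC, hB0, hl3], ?_⟩
    rw [hD, hB0]
    field_simp
  · intro t ht
    have hb := hBpos t ht
    rw [hD, hC]
    constructor <;> field_simp
  · intro t ht
    have hb := hBpos t ht
    have hap := hApos t ht
    have hd := hBd t ht
    refine ⟨?_, ?_, ?_, ?_⟩
    · have h1 : HasDerivAt A 4 t := by
        rw [hAf]
        simpa using ((hasDerivAt_id t).const_mul (4 : ℝ)).const_add l1
      convert h1 using 1
      rw [hC, ha]
      field_simp
      ring
    · convert hd using 1
      rw [hC, hD]
      field_simp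
      ring
    · have h1 : HasDerivAt C (k * l2 * l4 / B t ^ 2 / k) t := by
        rw [hCf]
        exact hd.div_const k
      convert h1 using 1
      rw [hC, hD]
      field_simp
      ring
    · have h1 := (hasDerivAt_const t (l2 * l4)).div hd hb.ne'
      have h2 : HasDerivAt D
          ((0 * B t - l2 * l4 * (k * l2 * l4 / B t ^ 2)) / B t ^ 2) t := by
        rw [hDf]
        exact h1
      convert h2 using 1
      rw [hC, hD]
      field_simp
      ring
  · rw [hAf]
    exact tendsto_atTop_add_const_left _ _
      (tendsto_id.const_mul_atTop (by norm_num : (0 : ℝ) < 4))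
  · rw [hCf]
    exact hBt.atTop_div_const hk0
  · rw [hDf]
    exact hBt.const_div_atTop _
end

section
/- Let λ1, λ2, λ3, λ4 > 0. Suppose A, B, C, D : [0,∞) → ℝ are differentiable, strictly positive, and satisfy A' = C/B + B/C - 2, B' = -B²/(AC) + C/A + D/C, C' = -C²/(AB) + B/A + D/B, D' = -D²/(BC), with A(0) = λ1, B(0) = λ2, C(0) = λ3, D(0) = λ4. Then for all t ≥ 0: B(t)C(t)D(t)² = λ2λ3λ4², A(t)D(t)(B(t) + C(t)) = λ1λ4(λ2 + λ3), and D(t) = λ4(1 + (3λ4/(λ2λ3))t)^{-1/3}. -/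
/-- Ricci flow on the class U3I2 (family of Proposition 7): conserved
quantities `BCD² = λ2λ3λ4²`, `AD(B+C) = λ1λ4(λ2+λ3)`, and the explicit
formula for `D`. -/
theorem stmt16 (l1 l2 l3 l4 : ℝ)
    (hl1 : 0 < l1) (hl2 : 0 < l2) (hl3 : 0 < l3) (hl4 : 0 < l4)
    (A B C D : ℝ → ℝ)
    (hA0 : A 0 = l1) (hB0 : B 0 = l2) (hC0 : C 0 = l3) (hD0 : D 0 = l4)
    (hApos : ∀ t ≥ (0 : ℝ), 0 < A t)
    (hBpos : ∀ t ≥ (0 : ℝ), 0 < B t)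
    (hCpos : ∀ t ≥ (0 : ℝ), 0 < C t)
    (hDpos : ∀ t ≥ (0 : ℝ), 0 < D t)
    (hA' : ∀ t ≥ (0 : ℝ), HasDerivAt A (C t / B t + B t / C t - 2) t)
    (hB' : ∀ t ≥ (0 : ℝ), HasDerivAt B
      (-(B t ^ 2) / (A t * C t) + C t / A t + D t / C t) t)
    (hC' : ∀ t ≥ (0 : ℝ), HasDerivAt C
      (-(C t ^ 2) / (A t * B t) + B t / A t + D t / B t) t)
    (hD' : ∀ t ≥ (0 : ℝ), HasDerivAt D (-(D t ^ 2) / (B t * C t)) t) :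
    (∀ t ≥ (0 : ℝ), B t * C t * D t ^ 2 = l2 * l3 * l4 ^ 2) ∧
    (∀ t ≥ (0 : ℝ), A t * D t * (B t + C t) = l1 * l4 * (l2 + l3)) ∧
    (∀ t ≥ (0 : ℝ), D t = l4 * (1 + (3 * l4 / (l2 * l3)) * t) ^ (-(1 : ℝ) / 3)) := by
  have h1 : ∀ t ≥ (0 : ℝ), B t * C t * D t ^ 2 = l2 * l3 * l4 ^ 2 := by
    have := const_of_deriv_zero_aux (fun t => B t * C t * D t ^ 2) (by
      intro t ht
      have a := hApos t ht
      have b := hBpos t ht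
      have c := hCpos t ht
      have d := hDpos t ht
      refine (((hB' t ht).fun_mul (hC' t ht)).fun_mul ((hD' t ht).fun_pow 2)).congr_deriv ?_
      field_simp
      ring)
    simpa only [hB0, hC0, hD0] using this
  refine ⟨h1, ?_, ?_⟩
  · have := const_of_deriv_zero_aux (fun t => A t * D t * (B t + C t)) (by
      intro t ht
      have a := hApos t ht
      have b := hBpos t ht
      have c := hCpos t ht
      have d := hDpos t ht
      refine (((hA' t ht).fun_mul (hD' t ht)).fun_mul
        ((hB' t ht).fun_add (hC' t ht))).congr_deriv ?_
      field_simp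
      ring)
    simpa only [hA0, hB0, hC0, hD0] using this
  · have h3 := const_of_deriv_zero_aux
      (fun t => (D t ^ 3)⁻¹ - 3 / (l2 * l3 * l4 ^ 2) * t) (by
      intro t ht
      have b := hBpos t ht
      have c := hCpos t ht
      have d := hDpos t ht
      have e : D t ^ 3 ≠ 0 := by positivity
      refine ((((hD' t ht).fun_pow 3).fun_inv e).fun_sub
        ((hasDerivAt_id t).const_mul (3 / (l2 * l3 * l4 ^ 2)))).congr_deriv ?_
      rw [← h1 t ht]
      field_simp
      norm_num
      ring)
    intro t ht
    have h4 := h3 t ht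
    have d := hDpos t ht
    simp only [hD0, mul_zero, sub_zero] at h4
    have h5 : 1 + (3 * l4 / (l2 * l3)) * t = (l4 / D t) ^ (3 : ℝ) := by
      have h6 : (D t ^ 3)⁻¹ = (l4 ^ 3)⁻¹ + 3 / (l2 * l3 * l4 ^ 2) * t := by linarith
      have h7 : (l4 / D t) ^ (3 : ℝ) = l4 ^ 3 * (D t ^ 3)⁻¹ := by
        rw [show (3 : ℝ) = ((3 : ℕ) : ℝ) by norm_num, Real.rpow_natCast, div_pow, div_eq_mul_inv]
      rw [h7, h6]
      field_simp
    rw [h5, ← Real.rpow_mul (by positivity), show (3 : ℝ) * (-(1 : ℝ) / 3) = -1 by norm_num,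
      Real.rpow_neg_one]
    field_simp
end

section
/- Let λ1, λ2, λ3, λ4 > 0 and set k4 = λ1(λ2 + λ3)/√(λ2λ3), so that λ1 ≤ k4/2. Suppose A, B, C, D : [0,∞) → ℝ are differentiable, strictly positive, and satisfy A' = C/B + B/C - 2, B' = -B²/(AC) + C/A + D/C, C' = -C²/(AB) + B/A + D/B, D' = -D²/(BC), with A(0) = λ1, B(0) = λ2, C(0) = λ3, D(0) = λ4. Then A satisfies A'(t) = k4²/A(t)² - 4 for all t ≥ 0; consequently A is nondecreasing, λ1 ≤ A(t) ≤ k4/2 for all t ≥ 0, and A(t) → k4/2 as t → ∞. -/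
open Filter

/-- Ricci flow on the class U3I2 (family of Proposition 7):
`A' = k4²/A² - 4`, so `A` is nondecreasing, bounded between `λ1` and `k4/2`,
and converges to `k4/2`. -/
theorem stmt17 (l1 l2 l3 l4 k4 : ℝ)
    (hl1 : 0 < l1) (hl2 : 0 < l2) (hl3 : 0 < l3) (hl4 : 0 < l4)
    (hk4 : k4 = l1 * (l2 + l3) / Real.sqrt (l2 * l3))
    (A B C D : ℝ → ℝ)
    (hA0 : A 0 = l1) (hB0 : B 0 = l2) (hC0 : C 0 = l3) (hD0 : D 0 = l4)
    (hApos : ∀ t ≥ (0 : ℝ), 0 < A t)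
    (hBpos : ∀ t ≥ (0 : ℝ), 0 < B t)
    (hCpos : ∀ t ≥ (0 : ℝ), 0 < C t)
    (hDpos : ∀ t ≥ (0 : ℝ), 0 < D t)
    (hA' : ∀ t ≥ (0 : ℝ), HasDerivAt A (C t / B t + B t / C t - 2) t)
    (hB' : ∀ t ≥ (0 : ℝ), HasDerivAt B
      (-(B t ^ 2) / (A t * C t) + C t / A t + D t / C t) t)
    (hC' : ∀ t ≥ (0 : ℝ), HasDerivAt C
      (-(C t ^ 2) / (A t * B t) + B t / A t + D t / B t) t)
    (hD' : ∀ t ≥ (0 : ℝ), HasDerivAt D (-(D t ^ 2) / (B t * C t)) t) :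
    l1 ≤ k4 / 2 ∧
    (∀ t ≥ (0 : ℝ), deriv A t = k4 ^ 2 / A t ^ 2 - 4) ∧
    MonotoneOn A (Set.Ici (0 : ℝ)) ∧
    (∀ t ≥ (0 : ℝ), l1 ≤ A t ∧ A t ≤ k4 / 2) ∧
    Tendsto A atTop (nhds (k4 / 2)) := by
  have hk : 0 < k4 := by
    rw [hk4]; positivity
  have hk2 : k4 ^ 2 = l1 ^ 2 * (l2 / l3 + l3 / l2 + 2) := by
    rw [hk4, div_pow, Real.sq_sqrt (by positivity)]
    field_simp
    ring
  have hQd : ∀ t ≥ (0 : ℝ),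
      HasDerivAt (fun s => A s ^ 2 * (B s / C s + C s / B s + 2)) 0 t := by
    intro t ht
    have hA := (hApos t ht).ne'
    have hB := (hBpos t ht).ne'
    have hC := (hCpos t ht).ne'
    have h := ((hA' t ht).fun_pow 2).fun_mul
      ((((hB' t ht).fun_div (hC' t ht) hC).fun_add
        ((hC' t ht).fun_div (hB' t ht) hB)).add_const 2)
    refine h.congr_deriv ?_
    field_simp
    ring
  have hQ : ∀ t ≥ (0 : ℝ), A t ^ 2 * (B t / C t + C t / B t + 2) = k4 ^ 2 := by
    intro t ht
    have h := constant_of_has_deriv_right_zero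
      (f := fun s => A s ^ 2 * (B s / C s + C s / B s + 2)) (a := 0) (b := t)
      (fun s hs => (hQd s hs.1).continuousAt.continuousWithinAt)
      (fun s hs => (hQd s hs.1).hasDerivWithinAt) t ⟨ht, le_refl t⟩
    simp only [hA0, hB0, hC0] at h
    rw [h, hk2]
  have hode : ∀ t ≥ (0 : ℝ), C t / B t + B t / C t - 2 = k4 ^ 2 / A t ^ 2 - 4 := by
    intro t ht
    have hA := (hApos t ht).ne'
    rw [← hQ t ht, mul_div_cancel_left₀ _ (pow_ne_zero 2 hA)]
    ring
  have hnn : ∀ t ≥ (0 : ℝ), 0 ≤ C t / B t + B t / C t - 2 := by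
    intro t ht
    have hB := hBpos t ht
    have hC := hCpos t ht
    have : C t / B t + B t / C t - 2 = (B t - C t) ^ 2 / (B t * C t) := by
      field_simp
      ring
    rw [this]; positivity
  have hmono : MonotoneOn A (Set.Ici (0 : ℝ)) := by
    refine monotoneOn_of_deriv_nonneg (convex_Ici 0)
      (fun s hs => (hA' s hs).continuousAt.continuousWithinAt) ?_ ?_
    · intro s hs
      exact (hA' s (interior_subset hs)).differentiableAt.differentiableWithinAt
    · intro s hs
      rw [(hA' s (interior_subset hs)).deriv]
      exact hnn s (interior_subset hs)
  have hub : ∀ t ≥ (0 : ℝ), A t ≤ k4 / 2 := by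
    intro t ht
    have h1 := hQ t ht
    have h2 := hnn t ht
    have hA := hApos t ht
    have h3 : (2 * A t) ^ 2 ≤ k4 ^ 2 := by
      nlinarith [mul_nonneg (sq_nonneg (A t)) h2]
    have := abs_le_of_sq_le_sq h3 hk.le
    linarith [le_abs_self (2 * A t)]
  have hlow : ∀ t > (0 : ℝ), k4 / 2 - k4 ^ 2 / 16 * t⁻¹ ≤ A t := by
    intro t ht
    obtain ⟨s, hs, hse⟩ := exists_hasDerivAt_eq_slope A
      (fun s => C s / B s + B s / C s - 2) ht
      (fun s hs => (hA' s hs.1).continuousAt.continuousWithinAt)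
      (fun s hs => hA' s hs.1.le)
    have hs0 : (0 : ℝ) ≤ s := hs.1.le
    have hAs := hApos s hs0
    have hus := hub s hs0
    have hut := hub t ht.le
    have hst := hmono (Set.mem_Ici.2 hs0) (Set.mem_Ici.2 ht.le) hs.2.le
    have h1 : 4 / k4 * (k4 - 2 * A s) ≤ k4 ^ 2 / A s ^ 2 - 4 := by
      have e : k4 ^ 2 / A s ^ 2 - 4 - 4 / k4 * (k4 - 2 * A s)
          = (k4 - 2 * A s) * (k4 * (k4 + 2 * A s) - 4 * A s ^ 2) / (k4 * A s ^ 2) := by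
        field_simp
        ring
      have : 0 ≤ (k4 - 2 * A s) * (k4 * (k4 + 2 * A s) - 4 * A s ^ 2) / (k4 * A s ^ 2) := by
        apply div_nonneg _ (by positivity)
        apply mul_nonneg (by linarith)
        nlinarith
      linarith
    have h2 : 4 / k4 * (k4 - 2 * A t) ≤ 4 / k4 * (k4 - 2 * A s) := by
      apply mul_le_mul_of_nonneg_left (by linarith) (by positivity)
    simp only [hode s hs0] at hse
    rw [hse] at h1
    have h3 : 4 / k4 * (k4 - 2 * A t) ≤ k4 / 2 / t := by
      refine (h2.trans h1).trans ?_
      rw [sub_zero, hA0]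
      apply div_le_div_of_nonneg_right (by linarith) ht.le
    have h4 := mul_le_mul_of_nonneg_left h3 (by positivity : 0 ≤ k4 / 8)
    have e1 : k4 / 8 * (4 / k4 * (k4 - 2 * A t)) = k4 / 2 - A t := by
      field_simp
      ring
    have e2 : k4 / 8 * (k4 / 2 / t) = k4 ^ 2 / 16 * t⁻¹ := by
      field_simp
      ring
    rw [e1, e2] at h4
    linarith
  refine ⟨hA0 ▸ hub 0 le_rfl, fun t ht => (hA' t ht).deriv.trans (hode t ht), hmono,
    fun t ht => ⟨hA0 ▸ hmono (Set.mem_Ici.2 le_rfl) (Set.mem_Ici.2 ht) ht, hub t ht⟩, ?_⟩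
  have hl : Tendsto (fun t : ℝ => k4 / 2 - k4 ^ 2 / 16 * t⁻¹) atTop (nhds (k4 / 2)) := by
    simpa using (tendsto_inv_atTop_zero.const_mul (k4 ^ 2 / 16)).const_sub (k4 / 2)
  refine tendsto_of_tendsto_of_tendsto_of_le_of_le' hl tendsto_const_nhds ?_ ?_
  · filter_upwards [eventually_gt_atTop 0] with t ht using hlow t ht
  · filter_upwards [eventually_ge_atTop 0] with t ht using hub t ht
end

section
/- Let a3 ∈ ℝ. Suppose A, B, C, D : [0,∞) → ℝ are differentiable, strictly positive, and satisfy A' = ((B+C)² - A²)/(BC) + a3²(B² - A²)/(BD), B' = ((A+C)² - B²)/(AC) + a3²(A² - B²)/(AD), C' = ((A-B)² - C²)/(AB), D' = a3²(A+B)²/(AB). Then the function A - B satisfies (A - B)'(t) = [ (C(t)² - (A(t)+B(t))²)/(A(t)B(t)C(t)) - a3²(A(t)+B(t))²/(A(t)B(t)D(t)) ]·(A(t) - B(t)) for all t ≥ 0. In particular, if A(0) = B(0), then A(t) = B(t) for all t ≥ 0. -/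
/-- Ricci flow on ŜL(2,ℝ) × ℝ (class U3S1, case (ii) of Proposition 8): the
relation `A = B` is preserved by the flow. -/
theorem stmt18 (a3 : ℝ)
    (A B C D : ℝ → ℝ)
    (hApos : ∀ t ≥ (0 : ℝ), 0 < A t)
    (hBpos : ∀ t ≥ (0 : ℝ), 0 < B t)
    (hCpos : ∀ t ≥ (0 : ℝ), 0 < C t)
    (hDpos : ∀ t ≥ (0 : ℝ), 0 < D t)
    (hA' : ∀ t ≥ (0 : ℝ), HasDerivAt A
      (((B t + C t) ^ 2 - A t ^ 2) / (B t * C t) +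
        a3 ^ 2 * (B t ^ 2 - A t ^ 2) / (B t * D t)) t)
    (hB' : ∀ t ≥ (0 : ℝ), HasDerivAt B
      (((A t + C t) ^ 2 - B t ^ 2) / (A t * C t) +
        a3 ^ 2 * (A t ^ 2 - B t ^ 2) / (A t * D t)) t)
    (hC' : ∀ t ≥ (0 : ℝ), HasDerivAt C
      (((A t - B t) ^ 2 - C t ^ 2) / (A t * B t)) t)
    (hD' : ∀ t ≥ (0 : ℝ), HasDerivAt D
      (a3 ^ 2 * (A t + B t) ^ 2 / (A t * B t)) t) :
    (∀ t ≥ (0 : ℝ), HasDerivAt (fun s => A s - B s)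
      (((C t ^ 2 - (A t + B t) ^ 2) / (A t * B t * C t) -
        a3 ^ 2 * (A t + B t) ^ 2 / (A t * B t * D t)) * (A t - B t)) t) ∧
    (A 0 = B 0 → ∀ t ≥ (0 : ℝ), A t = B t) := by
  have key : ∀ t ≥ (0 : ℝ), HasDerivAt (fun s => A s - B s)
      (((C t ^ 2 - (A t + B t) ^ 2) / (A t * B t * C t) -
        a3 ^ 2 * (A t + B t) ^ 2 / (A t * B t * D t)) * (A t - B t)) t := by
    intro t ht
    have hA := (hApos t ht).ne'
    have hB := (hBpos t ht).ne'
    have hC := (hCpos t ht).ne'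
    have hD := (hDpos t ht).ne'
    refine ((hA' t ht).sub (hB' t ht)).congr_deriv ?_
    field_simp
    ring
  refine ⟨key, fun h0 T hT => ?_⟩
  have cA : ContinuousOn A (Set.Icc 0 T) :=
    fun t ht => (hA' t ht.1).continuousAt.continuousWithinAt
  have cB : ContinuousOn B (Set.Icc 0 T) :=
    fun t ht => (hB' t ht.1).continuousAt.continuousWithinAt
  have cC : ContinuousOn C (Set.Icc 0 T) :=
    fun t ht => (hC' t ht.1).continuousAt.continuousWithinAt
  have cD : ContinuousOn D (Set.Icc 0 T) :=
    fun t ht => (hD' t ht.1).continuousAt.continuousWithinAt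
  have cK : ContinuousOn (fun t => (C t ^ 2 - (A t + B t) ^ 2) / (A t * B t * C t) -
        a3 ^ 2 * (A t + B t) ^ 2 / (A t * B t * D t)) (Set.Icc 0 T) := by
    refine ContinuousOn.sub (ContinuousOn.div (by fun_prop) (by fun_prop) ?_)
      (ContinuousOn.div (by fun_prop) (by fun_prop) ?_)
    · intro t ht
      exact (mul_pos (mul_pos (hApos t ht.1) (hBpos t ht.1)) (hCpos t ht.1)).ne'
    · intro t ht
      exact (mul_pos (mul_pos (hApos t ht.1) (hBpos t ht.1)) (hDpos t ht.1)).ne'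
  obtain ⟨K, hK⟩ := isCompact_Icc.exists_bound_of_continuousOn cK
  have h := norm_le_gronwallBound_of_norm_deriv_right_le (δ := 0) (K := K) (ε := 0)
    (cA.sub cB) (fun t ht => (key t ht.1).hasDerivWithinAt) (by simp [h0])
    (fun t ht => by
      rw [norm_mul, add_zero]
      exact mul_le_mul_of_nonneg_right (hK t ⟨ht.1, ht.2.le⟩) (norm_nonneg _))
    T ⟨hT, le_rfl⟩
  rw [gronwallBound_ε0_δ0] at h
  exact sub_eq_zero.mp (norm_le_zero_iff.mp h)
end

section
/- Let λ1, λ3, λ4 > 0 and a3 ∈ ℝ. Suppose A, C : [0,∞) → ℝ are differentiable, strictly positive, and satisfy A' = C/A + 2 and C' = -C²/A², with A(0) = λ1 and C(0) = λ3, and let D(t) = 4a3²t + λ4 (which satisfies D' = 4a3², D(0) = λ4). Then for all t ≥ 0: the ratio C/A is nonincreasing (indeed (C/A)' = -(2/A)(C/A + (C/A)²) ≤ 0); 2t + λ1 ≤ A(t) ≤ (2 + λ3/λ1)t + λ1; and 2λ1λ3/(2λ1 + λ3) ≤ C(t) ≤ λ3. In particular A(t) → ∞ as t → ∞ while C(t)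 remains bounded between positive constants. -/
open Filter

lemma anti_aux (f f' : ℝ → ℝ) (h : ∀ t ≥ (0 : ℝ), HasDerivAt f (f' t) t)
    (hn : ∀ t ≥ (0 : ℝ), f' t ≤ 0) : AntitoneOn f (Set.Ici (0 : ℝ)) := by
  apply antitoneOn_of_deriv_nonpos (convex_Ici 0)
  · exact fun t ht => (h t ht).continuousAt.continuousWithinAt
  · intro t ht
    rw [interior_Ici] at ht
    exact (h t (le_of_lt ht)).differentiableAt.differentiableWithinAt
  · intro t ht
    rw [interior_Ici] at ht
    rw [(h t (le_of_lt ht)).deriv]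
    exact hn t (le_of_lt ht)

/-- Reduced Ricci flow on ŜL(2,ℝ) × ℝ (class U3S1, case (ii) of
Proposition 8 with `A = B`): `C/A` is nonincreasing, growth bounds for `A`,
two-sided positive bounds for `C`, and `A → ∞`. -/
theorem stmt19 (l1 l3 l4 a3 : ℝ)
    (hl1 : 0 < l1) (hl3 : 0 < l3) (hl4 : 0 < l4)
    (A C D : ℝ → ℝ)
    (hA0 : A 0 = l1) (hC0 : C 0 = l3)
    (hApos : ∀ t ≥ (0 : ℝ), 0 < A t)
    (hCpos : ∀ t ≥ (0 : ℝ), 0 < C t)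
    (hA' : ∀ t ≥ (0 : ℝ), HasDerivAt A (C t / A t + 2) t)
    (hC' : ∀ t ≥ (0 : ℝ), HasDerivAt C (-(C t ^ 2) / A t ^ 2) t)
    (hD : ∀ t, D t = 4 * a3 ^ 2 * t + l4) :
    (∀ t, HasDerivAt D (4 * a3 ^ 2) t) ∧ D 0 = l4 ∧
    (∀ t ≥ (0 : ℝ),
      HasDerivAt (fun s => C s / A s)
        (-(2 / A t) * (C t / A t + (C t / A t) ^ 2)) t ∧
      -(2 / A t) * (C t / A t + (C t / A t) ^ 2) ≤ 0) ∧
    AntitoneOn (fun t => C t / A t) (Set.Ici (0 : ℝ)) ∧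
    (∀ t ≥ (0 : ℝ), 2 * t + l1 ≤ A t ∧ A t ≤ (2 + l3 / l1) * t + l1) ∧
    (∀ t ≥ (0 : ℝ), 2 * l1 * l3 / (2 * l1 + l3) ≤ C t ∧ C t ≤ l3) ∧
    Tendsto A atTop atTop := by
  have hR : ∀ t ≥ (0 : ℝ), HasDerivAt (fun s => C s / A s)
        (-(2 / A t) * (C t / A t + (C t / A t) ^ 2)) t := by
    intro t ht
    have h := (hC' t ht).fun_div (hA' t ht) (hApos t ht).ne'
    have hA := (hApos t ht).ne'
    refine h.congr_deriv ?_
    field_simp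
    ring
  have hRn : ∀ t ≥ (0 : ℝ), -(2 / A t) * (C t / A t + (C t / A t) ^ 2) ≤ 0 := by
    intro t ht
    have h1 := hApos t ht
    have h2 := hCpos t ht
    have : 0 ≤ (2 / A t) * (C t / A t + (C t / A t) ^ 2) := by positivity
    linarith
  have hanti := anti_aux _ _ hR hRn
  have hlow : ∀ t ≥ (0 : ℝ), 2 * t + l1 ≤ A t := by
    intro t ht
    have h := anti_aux (fun s => 2 * s - A s) (fun s => 2 * 1 - (C s / A s + 2))
      (fun s hs => ((hasDerivAt_id s).const_mul 2).sub (hA' s hs))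
      (fun s hs => by
        have := div_pos (hCpos s hs) (hApos s hs)
        linarith) (Set.mem_Ici.2 le_rfl) (Set.mem_Ici.2 ht) ht
    simp only [hA0] at h
    linarith
  refine ⟨?_, by simp [hD], fun t ht => ⟨hR t ht, hRn t ht⟩, hanti, ?_, ?_, ?_⟩
  · intro t
    have : D = fun t => 4 * a3 ^ 2 * t + l4 := funext hD
    rw [this]
    simpa using ((hasDerivAt_id t).const_mul (4 * a3 ^ 2)).add_const l4
  · intro t ht
    refine ⟨hlow t ht, ?_⟩
    have h := anti_aux (fun s => A s - (2 + l3 / l1) * s)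
      (fun s => (C s / A s + 2) - (2 + l3 / l1) * 1)
      (fun s hs => (hA' s hs).sub ((hasDerivAt_id s).const_mul (2 + l3 / l1)))
      (fun s hs => by
        have := hanti (Set.mem_Ici.2 le_rfl) (Set.mem_Ici.2 hs) hs
        simp only [hA0, hC0] at this
        linarith) (Set.mem_Ici.2 le_rfl) (Set.mem_Ici.2 ht) ht
    simp only [hA0] at h
    linarith
  · intro t ht
    constructor
    · have h := anti_aux (fun s => (C s)⁻¹ + (A s)⁻¹ * (1 / 2))
        (fun s => -(-(C s ^ 2) / A s ^ 2) / C s ^ 2 + (-(C s / A s + 2) / A s ^ 2) * (1 / 2))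
        (fun s hs => ((hC' s hs).fun_inv (hCpos s hs).ne').add
          (((hA' s hs).fun_inv (hApos s hs).ne').mul_const (1 / 2)))
        (fun s hs => by
          have h1 := hApos s hs
          have h2 := hCpos s hs
          have h3 : 0 < C s / (2 * A s ^ 3) := by positivity
          have : -(-(C s ^ 2) / A s ^ 2) / C s ^ 2 + (-(C s / A s + 2) / A s ^ 2) * (1 / 2)
              = -(C s / (2 * A s ^ 3)) := by
            field_simp
            ring
          rw [this]
          linarith) (Set.mem_Ici.2 le_rfl) (Set.mem_Ici.2 ht) ht
      simp only [hA0, hC0] at h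
      have h1 := hCpos t ht
      have h2 : 0 < (A t)⁻¹ := inv_pos.2 (hApos t ht)
      have h3 : (C t)⁻¹ ≤ (2 * l1 * l3 / (2 * l1 + l3))⁻¹ := by
        have : (2 * l1 * l3 / (2 * l1 + l3))⁻¹ = l3⁻¹ + l1⁻¹ * (1 / 2) := by
          field_simp
        rw [this]
        linarith
      exact (inv_le_inv₀ h1 (by positivity)).1 h3
    · have h := anti_aux C _ hC' (fun s hs => by
        have h1 := hApos s hs
        have : 0 ≤ C s ^ 2 / A s ^ 2 := by positivity
        rw [neg_div]
        linarith) (Set.mem_Ici.2 le_rfl) (Set.mem_Ici.2 ht) ht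
      rwa [hC0] at h
  · apply tendsto_atTop_mono' atTop (f₁ := fun t => t)
    · filter_upwards [eventually_ge_atTop (0 : ℝ)] with t ht
      have := hlow t ht
      linarith
    · exact tendsto_id
end
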